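/- arXiv:1304.1274 — 12 statements merged into one kernel-verified Lean document; each statement's English description precedes it below -/
import Mathlib

section
/- (Inequality Lemma) Let G be a group acting on a set X, let A ⊆ Y ⊆ X, and let a ∈ G and a family of elements a₀, …, a_{n-1} ∈ G be such that: Y = A ∪ a • A; the sets a₀ • A, …, a_{n-1} • A are pairwise disjoint; and Y is invariant under a and under each aᵢ (i.e., a • Y = Y and aᵢ • Y = Y). Then for all indices i, j, ℓ ∈ {0, …, n-1} with i ≠ j, one has (a_ℓ a⁻¹ a_j⁻¹) • (a_i • A) ⊆ a_ℓ • A and (a_ℓ a a_j⁻¹) • (a_i • A) ⊆ a_ℓ • A. -/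
/-!
Put `D = Y \ A`. Disjointness of `g • A` and `h • A` says that `h⁻¹` carries `g • A` into `D`.
Both `a⁻¹` and `a` carry `D` into `A`: the former because `D ⊆ a • A`, the latter because
`a • D` lies in `Y` and avoids `a • A`.
-/

open Pointwise

section

variable {G X : Type*} [Group G] [MulAction G X] {A Y : Set X} {a g h : G}

theorem smul_subset_smul_sdiff (hAY : A ⊆ Y) (hgh : g • Y ⊆ h • Y)
    (hdisj : Disjoint (g • A) (h • A)) : g • A ⊆ h • (Y \ A) := by
  rw [Set.smul_set_sdiff]
  exact Set.subset_sdiff.mpr ⟨(Set.smul_set_mono hAY).trans hgh, hdisj⟩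

theorem inv_smul_sdiff_subset (hY : Y ⊆ A ∪ a • A) : a⁻¹ • (Y \ A) ⊆ A :=
  Set.subset_smul_set_iff.mp (Set.sdiff_subset_iff.mpr hY)

theorem smul_sdiff_subset (hY : Y ⊆ A ∪ a • A) (ha : a • Y ⊆ Y) : a • (Y \ A) ⊆ A := by
  rw [Set.smul_set_sdiff, Set.sdiff_subset_iff, Set.union_comm]
  exact ha.trans hY

theorem mul_mul_inv_smul_subset {D S : Set X} {t : G} (hS : S ⊆ h • D) (ht : t • D ⊆ A) (c : G) :
    (c * t * h⁻¹) • S ⊆ c • A :=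
  calc
    (c * t * h⁻¹) • S ⊆ (c * t * h⁻¹) • h • D := Set.smul_set_mono hS
    _ = c • t • D := by simp only [mul_smul, inv_smul_smul]
    _ ⊆ c • A := Set.smul_set_mono ht

theorem stmt_1_general (hAY : A ⊆ Y) (hY : Y ⊆ A ∪ a • A) (ha : a • Y ⊆ Y)
    (hgh : g • Y ⊆ h • Y) (hdisj : Disjoint (g • A) (h • A)) (c : G) :
    (c * a⁻¹ * h⁻¹) • (g • A) ⊆ c • A ∧ (c * a * h⁻¹) • (g • A) ⊆ c • A :=
  have hgA : g • A ⊆ h • (Y \ A) := smul_subset_smul_sdiff hAY hgh hdisj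
  ⟨mul_mul_inv_smul_subset hgA (inv_smul_sdiff_subset hY) c,
    mul_mul_inv_smul_subset hgA (smul_sdiff_subset hY ha) c⟩

end

theorem stmt_1 {G X : Type*} [Group G] [MulAction G X]
    (A Y : Set X) (hAY : A ⊆ Y) (n : ℕ)
    (a : G) (b : Fin n → G)
    (hY : Y = A ∪ a • A)
    (hdisj : ∀ i j : Fin n, i ≠ j → Disjoint (b i • A) (b j • A))
    (ha : a • Y = Y) (hb : ∀ i : Fin n, b i • Y = Y) :
    ∀ i j l : Fin n, i ≠ j →
      (b l * a⁻¹ * (b j)⁻¹) • (b i • A) ⊆ b l • A ∧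
      (b l * a * (b j)⁻¹) • (b i • A) ⊆ b l • A := by
  intro i j l hij
  have hij_smul : b i • Y = b j • Y := (hb i).trans (hb j).symm
  exact stmt_1_general hAY hY.subset ha.subset hij_smul.subset (hdisj i j hij) (b l)
end

section
/- Let G be a group acting on a set X, let A ⊆ Y ⊆ X, let n ≥ 3, and let a, a₀, …, a_{n-1} ∈ G be such that: Y = A ∪ a • A; the sets a₀ • A, …, a_{n-1} • A are pairwise disjoint; and Y is invariant under a and under each aᵢ. Then the n+1 sets a₀ • A, a₁ • A, …, a_{n-2} • A, (a_{n-1} a a_{n-1}⁻¹ a₀) • A, (a_{n-1} a a_{n-1}⁻¹ a₁) • A are pairwise disjoint, and Y is invariant under each of the n+1 elements a₀, …, a_{n-2}, a_{n-1} a a_{n-1}⁻¹ a₀, a_{n-1} a a_{n-1}⁻¹ a₁. -/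
/-!
Put `B = a_{n-1} • A` and `g = a_{n-1} a a_{n-1}⁻¹`. Translating `Y = A ∪ a • A` by `a_{n-1}` gives
`Y = B ∪ g • B`. The other sets `aᵢ • A` lie in `Y` and miss `B`, so they lie in `g • B`, whereas
their translates `g • aᵢ • A` miss `g • B`. Hence all `2 (n - 1)` sets `aᵢ • A`, `g • aᵢ • A` with
`i < n - 1` are pairwise disjoint; for `n ≥ 3` these include the required `n + 1`.
-/

open Pointwise

section Translates

open Function

variable {ι G X : Type*} [Group G] [MulAction G X]

theorem disjoint_smul_set_of_subset_union {g : G} {B S T : Set X} (hS : S ⊆ B ∪ g • B)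
    (hSB : Disjoint S B) (hTB : Disjoint T B) : Disjoint S (g • T) :=
  have hSg : S ⊆ g • B := hSB.subset_right_of_subset_union hS
  (Set.disjoint_smul_set.2 hTB.symm).mono_left hSg

theorem pairwise_disjoint_sumElim_smul_set {g : G} {B : Set X} {S : ι → Set X}
    (hS : Pairwise (Disjoint on S)) (hSB : ∀ i, Disjoint (S i) B) (hSub : ∀ i, S i ⊆ B ∪ g • B) :
    Pairwise (Disjoint on Sum.elim S fun i => g • S i) := by
  have hcross (i j : ι) : Disjoint (S i) (g • S j) :=
    disjoint_smul_set_of_subset_union (hSub i) (hSB i) (hSB j)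
  rintro (i | i) (j | j) hij
  · exact hS (ne_of_apply_ne Sum.inl hij)
  · exact hcross i j
  · exact (hcross j i).symm
  · exact Set.disjoint_smul_set.2 (hS (ne_of_apply_ne Sum.inr hij))

theorem eq_smul_union_conj_smul {A Y : Set X} {a d : G} (hY : Y = A ∪ a • A) (hd : d • Y = Y) :
    Y = d • A ∪ (d * a * d⁻¹) • d • A := by
  rw [smul_smul, inv_mul_cancel_right, mul_smul, ← Set.smul_set_union, ← hY, hd]

theorem stmt_2_general {A Y : Set X} {a d : G} {b : ι → G} (hY : Y = A ∪ a • A)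
    (hb : Pairwise (Disjoint on fun i => b i • A)) (hbd : ∀ i, Disjoint (b i • A) (d • A))
    (haY : a • Y = Y) (hdY : d • Y = Y) (hbY : ∀ i, b i • Y = Y) :
    Pairwise (Disjoint on fun s => Sum.elim b (fun i => d * a * d⁻¹ * b i) s • A) ∧
      ∀ s, Sum.elim b (fun i => d * a * d⁻¹ * b i) s • Y = Y := by
  constructor
  · have hsub (i : ι) : b i • A ⊆ d • A ∪ (d * a * d⁻¹) • d • A := by
      rw [← eq_smul_union_conj_smul hY hdY, ← hbY i]
      exact Set.smul_set_mono (hY ▸ Set.subset_union_left)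
    convert pairwise_disjoint_sumElim_smul_set hb hbd hsub using 2
    ext1 (i | i)
    · rfl
    · exact mul_smul _ _ _
  · have hconj : d * a * d⁻¹ ∈ MulAction.stabilizer G Y :=
      mul_mem (mul_mem hdY haY) (inv_mem hdY)
    rintro (i | i)
    · exact hbY i
    · exact mul_mem hconj (hbY i)

end Translates

theorem exists_injective_sumElim_eq_dite {α : Type*} {n : ℕ} (hn : 3 ≤ n) :
    ∃ e : Fin (n + 1) → Fin (n - 1) ⊕ Fin (n - 1), e.Injective ∧
      ∀ (p q : Fin (n - 1) → α) (i : Fin (n + 1)), Sum.elim p q (e i) =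
        if h : (i : ℕ) < n - 1 then p ⟨i, h⟩
        else if (i : ℕ) = n - 1 then q ⟨0, by omega⟩ else q ⟨1, by omega⟩ := by
  refine ⟨fun i => if h : (i : ℕ) < n - 1 then .inl ⟨i, h⟩ else .inr ⟨i - (n - 1), by omega⟩,
    fun i j hij => ?_, fun p q i => ?_⟩
  · grind
  · split_ifs with h h'
    · simp [h]
    · simp [h']
    · have : (i : ℕ) - (n - 1) = 1 := by omega
      simp [h, this]

theorem stmt_2 {G X : Type*} [Group G] [MulAction G X]
    (A Y : Set X) (hAY : A ⊆ Y) (n : ℕ) (hn : 3 ≤ n)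
    (a : G) (b : Fin n → G)
    (hY : Y = A ∪ a • A)
    (hdisj : ∀ i j : Fin n, i ≠ j → Disjoint (b i • A) (b j • A))
    (ha : a • Y = Y) (hb : ∀ i : Fin n, b i • Y = Y)
    (c : Fin (n + 1) → G)
    (hc : ∀ i : Fin (n + 1), c i =
      if h : (i : ℕ) < n - 1 then b ⟨i, by omega⟩
      else if (i : ℕ) = n - 1 then
        b ⟨n - 1, by omega⟩ * a * (b ⟨n - 1, by omega⟩)⁻¹ * b ⟨0, by omega⟩
      else
        b ⟨n - 1, by omega⟩ * a * (b ⟨n - 1, by omega⟩)⁻¹ * b ⟨1, by omega⟩) :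
    (∀ i j : Fin (n + 1), i ≠ j → Disjoint (c i • A) (c j • A)) ∧
    (∀ i : Fin (n + 1), c i • Y = Y) := by
  let b' (i : Fin (n - 1)) : G := b ⟨i, by omega⟩
  let d : G := b ⟨n - 1, by omega⟩
  have hb' (i j : Fin (n - 1)) (hij : i ≠ j) : Disjoint (b' i • A) (b' j • A) :=
    hdisj _ _ (by simpa [Fin.ext_iff] using hij)
  have hbd (i : Fin (n - 1)) : Disjoint (b' i • A) (d • A) :=
    hdisj _ _ (by simpa [Fin.ext_iff] using i.isLt.ne)
  obtain ⟨hdisjoint, hinvariant⟩ := stmt_2_general hY hb' hbd ha (hb _) fun i => hb _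
  obtain ⟨e, he, hce⟩ := exists_injective_sumElim_eq_dite (α := G) hn
  have hc' (i : Fin (n + 1)) : c i = Sum.elim b' (fun j => d * a * d⁻¹ * b' j) (e i) := by
    rw [hce, hc i]
  simp only [hc']
  exact ⟨fun i j hij => hdisjoint (he.ne hij), fun i => hinvariant (e i)⟩
end

section
/- Let G be a group acting on a set X, and let A ⊆ Y ⊆ X with A nonempty. Suppose there exist elements a, a₀, a₁, a₂ ∈ G such that Y = A ∪ a • A, the sets a₀ • A, a₁ • A, a₂ • A are pairwise disjoint, and Y is invariant under a, a₀, a₁, a₂. Then for every n ≥ 3 there exist elements b₀, …, b_{n-1} ∈ G such that the sets b₀ • A, …, b_{n-1} • A are pairwise disjoint and Y is invariant under a and under each bᵢ. -/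
open Pointwise

/-!
Put `d = (a₀a)⁻¹a₁` and `e = (a₀a)⁻¹a₂`. Since `aᵢ • A ⊆ Y = a₀ • Y = a₀ • A ∪ a₀a • A` misses
`a₀ • A` for `i = 1, 2`, both `d` and `e` map `A` into itself, and the images `d • A` and `e • A`
are disjoint. So `e • A` lies in `A` and outside `d • A`, which makes its translates
`dⁿe • A` pairwise disjoint.
-/

theorem antitone_pow_smul_set {M X : Type*} [Monoid M] [MulAction M X] {g : M} {s : Set X}
    (hg : g • s ⊆ s) : Antitone fun n : ℕ => g ^ n • s :=
  antitone_nat_of_succ_le fun n => by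
    simpa only [pow_succ, mul_smul] using Set.smul_set_mono hg

section

open Function

variable {G X : Type*} [Group G] [MulAction G X]

theorem pairwise_disjoint_pow_smul_set {g : G} {s t : Set X} (hg : g • s ⊆ s) (hts : t ⊆ s)
    (hd : Disjoint (g • s) t) : Pairwise (Disjoint on fun n : ℕ => g ^ n • t) := by
  refine (pairwise_disjoint_on _).2 fun i j hij => ?_
  have hj : g ^ j • t ⊆ g ^ i • g • s :=
    calc g ^ j • t ⊆ g ^ j • s := Set.smul_set_mono hts
      _ ⊆ g ^ (i + 1) • s := antitone_pow_smul_set hg hij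
      _ = g ^ i • g • s := by rw [pow_succ, mul_smul]
  exact (Set.disjoint_smul_set.2 hd.symm).mono_right hj

theorem inv_mul_smul_set_subset_of_disjoint {g h : G} {s t u : Set X}
    (hg : g • t ⊆ u ∪ h • s) (hd : Disjoint u (g • t)) : (h⁻¹ * g) • t ⊆ s := by
  have hgh : g • t ⊆ h • s := hd.symm.subset_right_of_subset_union hg
  rwa [mul_smul, ← Set.subset_smul_set_iff]

theorem stmt_3_general {A Y : Set X} {a a0 a1 a2 : G} (hY : Y = A ∪ a • A)
    (h01 : Disjoint (a0 • A) (a1 • A))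
    (h02 : Disjoint (a0 • A) (a2 • A))
    (h12 : Disjoint (a1 • A) (a2 • A))
    (ha : a • Y = Y) (ha0 : a0 • Y = Y) (ha1 : a1 • Y = Y) (ha2 : a2 • Y = Y) :
    ∃ b : ℕ → G, Pairwise (Disjoint on fun n => b n • A) ∧ ∀ n, b n • Y = Y := by
  have smul_subset {c : G} (hc : c • Y = Y) : c • A ⊆ a0 • A ∪ (a0 * a) • A :=
    calc c • A ⊆ c • Y := Set.smul_set_mono (hY ▸ Set.subset_union_left)
      _ = a0 • Y := hc.trans ha0.symm
      _ = a0 • A ∪ (a0 * a) • A := by rw [hY, Set.smul_set_union, mul_smul]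
  have stab {c : G} (hc : c • Y = Y) : (a0 * a)⁻¹ * c ∈ MulAction.stabilizer G Y :=
    mul_mem (inv_mem (mul_mem ha0 ha)) hc
  have hd : ((a0 * a)⁻¹ * a1) • A ⊆ A := inv_mul_smul_set_subset_of_disjoint (smul_subset ha1) h01
  have he : ((a0 * a)⁻¹ * a2) • A ⊆ A := inv_mul_smul_set_subset_of_disjoint (smul_subset ha2) h02
  have hde : Disjoint (((a0 * a)⁻¹ * a1) • A) (((a0 * a)⁻¹ * a2) • A) := by
    simpa only [mul_smul, Set.disjoint_smul_set] using h12
  refine ⟨fun n => ((a0 * a)⁻¹ * a1) ^ n * ((a0 * a)⁻¹ * a2), ?_, fun n => ?_⟩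
  · simpa only [mul_smul] using pairwise_disjoint_pow_smul_set hd he hde
  · exact mul_mem (pow_mem (stab ha1) n) (stab ha2)

end

theorem stmt_3 {G X : Type*} [Group G] [MulAction G X]
    (A Y : Set X) (hA : A.Nonempty) (hAY : A ⊆ Y)
    (a a0 a1 a2 : G)
    (hY : Y = A ∪ a • A)
    (h01 : Disjoint (a0 • A) (a1 • A))
    (h02 : Disjoint (a0 • A) (a2 • A))
    (h12 : Disjoint (a1 • A) (a2 • A))
    (ha : a • Y = Y) (ha0 : a0 • Y = Y) (ha1 : a1 • Y = Y) (ha2 : a2 • Y = Y) :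
    ∀ n : ℕ, 3 ≤ n → ∃ b : Fin n → G,
      (∀ i j : Fin n, i ≠ j → Disjoint (b i • A) (b j • A)) ∧
      a • Y = Y ∧ (∀ i : Fin n, b i • Y = Y) := by
  obtain ⟨b, hdisj, hb⟩ := stmt_3_general hY h01 h02 h12 ha ha0 ha1 ha2
  exact fun n _ => ⟨fun i => b i, fun i j hij => hdisj (Fin.val_ne_of_ne hij), ha, fun i => hb i⟩
end

section
/- Let G be a group acting on a set X, and let A ⊆ Y ⊆ X. Suppose there exist elements a, a₀, a₁, a₂, a₃, a₄ ∈ G such that Y = A ∪ a • A, the sets a₀ • A, a₁ • A, a₂ • A, a₃ • A, a₄ • A are pairwise disjoint, and Y is invariant under a and under each aᵢ (i = 0, …, 4). Set f₁ = a₁ a a₂⁻¹, f₂ = a₃ a a₄⁻¹, U₀ = a₀ • A, U₁⁺ = a₁ • A, U₁⁻ = a₂ • A, U₂⁺ = a₃ • A, U₂⁻ = a₄ • A. Then: f₁ • (U₀ ∪ U₁⁺ ∪ U₂⁺ ∪ U₂⁻) ⊆ U₁⁺, f₁⁻¹ • (U₀ ∪ U₁⁻ ∪ U₂⁺ ∪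 U₂⁻) ⊆ U₁⁻, f₂ • (U₀ ∪ U₂⁺ ∪ U₁⁺ ∪ U₁⁻) ⊆ U₂⁺, and f₂⁻¹ • (U₀ ∪ U₂⁻ ∪ U₁⁺ ∪ U₁⁻) ⊆ U₂⁻. -/
open Pointwise

/-!
The element `a` maps `Y \ A` into `A`: for `y ∈ Y \ A`, the point `a • y` lies in `Y = A ∪ a • A`
but not in `a • A`. Since also `Y = A ∪ a⁻¹ • A`, the same holds for `a⁻¹`. A translate of `A`
inside `Y` that is disjoint from `q • A` is pulled back by `q⁻¹` into `Y \ A`, so `p * a * q⁻¹`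
sends it into `p • A`.
-/

section PingPong

variable {G X : Type*} [Group G] [MulAction G X] {A B Y S : Set X} {a g h p q : G}

theorem subset_union_inv_smul_of_smul_subset_union (haY : a • Y ⊆ A ∪ a • B) :
    Y ⊆ B ∪ a⁻¹ • A := by
  rw [Set.smul_set_subset_iff_subset_inv_smul_set, Set.smul_set_union, inv_smul_smul] at haY
  exact haY.trans_eq (Set.union_comm _ _)

theorem smul_subset_smul_sdiff_of_disjoint (hAY : A ⊆ Y) (hgh : g • Y ⊆ h • Y)
    (hdisj : Disjoint (g • A) (h • B)) : g • A ⊆ h • (Y \ B) := by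
  rw [Set.smul_set_sdiff]
  exact Set.subset_sdiff.2 ⟨(Set.smul_set_mono hAY).trans hgh, hdisj⟩

theorem mul_mul_inv_smul_subset_smul (hY : Y ⊆ B ∪ a⁻¹ • A) (hS : S ⊆ q • (Y \ B)) :
    (p * a * q⁻¹) • S ⊆ p • A := by
  rw [Set.smul_set_subset_iff_subset_inv_smul_set]
  calc
    S ⊆ q • (Y \ B) := hS
    _ ⊆ q • a⁻¹ • A := Set.smul_set_mono (Set.sdiff_subset_iff.2 hY)
    _ = (p * a * q⁻¹)⁻¹ • p • A := by simp only [smul_smul]; group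

theorem inv_mul_mul_inv_smul_subset_smul (hY : Y ⊆ B ∪ a • A) (hS : S ⊆ p • (Y \ B)) :
    (p * a * q⁻¹)⁻¹ • S ⊆ q • A := by
  have hinv : (p * a * q⁻¹)⁻¹ = q * a⁻¹ * p⁻¹ := by group
  rw [hinv]
  exact mul_mul_inv_smul_subset_smul (by rwa [inv_inv]) hS

end PingPong

theorem stmt_5 {G X : Type*} [Group G] [MulAction G X]
    (A Y : Set X) (hAY : A ⊆ Y)
    (a a0 a1 a2 a3 a4 : G)
    (hY : Y = A ∪ a • A)
    (h01 : Disjoint (a0 • A) (a1 • A))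
    (h02 : Disjoint (a0 • A) (a2 • A))
    (h03 : Disjoint (a0 • A) (a3 • A))
    (h04 : Disjoint (a0 • A) (a4 • A))
    (h12 : Disjoint (a1 • A) (a2 • A))
    (h13 : Disjoint (a1 • A) (a3 • A))
    (h14 : Disjoint (a1 • A) (a4 • A))
    (h23 : Disjoint (a2 • A) (a3 • A))
    (h24 : Disjoint (a2 • A) (a4 • A))
    (h34 : Disjoint (a3 • A) (a4 • A))
    (ha : a • Y = Y) (ha0 : a0 • Y = Y) (ha1 : a1 • Y = Y)
    (ha2 : a2 • Y = Y) (ha3 : a3 • Y = Y) (ha4 : a4 • Y = Y) :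
    (a1 * a * a2⁻¹) • (a0 • A ∪ a1 • A ∪ a3 • A ∪ a4 • A) ⊆ a1 • A ∧
    (a1 * a * a2⁻¹)⁻¹ • (a0 • A ∪ a2 • A ∪ a3 • A ∪ a4 • A) ⊆ a2 • A ∧
    (a3 * a * a4⁻¹) • (a0 • A ∪ a3 • A ∪ a1 • A ∪ a2 • A) ⊆ a3 • A ∧
    (a3 * a * a4⁻¹)⁻¹ • (a0 • A ∪ a4 • A ∪ a1 • A ∪ a2 • A) ⊆ a4 • A := by
  have hcover : Y ⊆ A ∪ a • A := hY.subset
  have hcover_inv : Y ⊆ A ∪ a⁻¹ • A :=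
    subset_union_inv_smul_of_smul_subset_union (ha.trans hY).subset
  have hsub {g h : G} (hg : g • Y = Y) (hh : h • Y = Y) (hdisj : Disjoint (g • A) (h • A)) :
      g • A ⊆ h • (Y \ A) :=
    smul_subset_smul_sdiff_of_disjoint hAY (hg.trans hh.symm).subset hdisj
  refine ⟨mul_mul_inv_smul_subset_smul hcover_inv ?_, inv_mul_mul_inv_smul_subset_smul hcover ?_,
    mul_mul_inv_smul_subset_smul hcover_inv ?_, inv_mul_mul_inv_smul_subset_smul hcover ?_⟩ <;>
    simp only [Set.union_subset_iff, and_assoc]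
  · exact ⟨hsub ha0 ha2 h02, hsub ha1 ha2 h12, hsub ha3 ha2 h23.symm, hsub ha4 ha2 h24.symm⟩
  · exact ⟨hsub ha0 ha1 h01, hsub ha2 ha1 h12.symm, hsub ha3 ha1 h13.symm, hsub ha4 ha1 h14.symm⟩
  · exact ⟨hsub ha0 ha4 h04, hsub ha3 ha4 h34, hsub ha1 ha4 h14, hsub ha2 ha4 h24⟩
  · exact ⟨hsub ha0 ha3 h03, hsub ha4 ha3 h34.symm, hsub ha1 ha3 h13, hsub ha2 ha3 h23⟩
end

section
/- Let G be a group acting on a set X, let f₁, f₂ ∈ G, and let U₀, U₁⁺, U₁⁻, U₂⁺, U₂⁻ be nonempty pairwise disjoint subsets of X with: f₁ • (U₀ ∪ U₁⁺ ∪ U₂⁺ ∪ U₂⁻) ⊆ U₁⁺, f₁⁻¹ • (U₀ ∪ U₁⁻ ∪ U₂⁺ ∪ U₂⁻) ⊆ U₁⁻, f₂ • (U₀ ∪ U₂⁺ ∪ U₁⁺ ∪ U₁⁻) ⊆ U₂⁺, and f₂⁻¹ • (U₀ ∪ U₂⁻ ∪ U₁⁺ ∪ U₁⁻) ⊆ U₂⁻.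 Let F be the subgroup of G generated by f₁ and f₂. Then F acts freely on the F-invariant set F • U₀ = ⋃_{h ∈ F} h • U₀; that is, for every h ∈ F with h ≠ 1 and every point z ∈ F • U₀, one has h • z ≠ z. -/
open Pointwise

/-!
A nontrivial element of `F` is the value of a nonempty reduced word in the generators. Apply the
letters of such a word one at a time, from right to left, to a point of `U₀`. Each letter puts the
point into the set attached to it, and since the word is reduced the next letter is not the inverse
of this one, so its inclusion applies. Hence the word maps `U₀` into a set disjoint from `U₀`. A
fixed point `g • u` of `h`, with `u ∈ U₀`, would make `u` a fixed point of the conjugate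
`g⁻¹ * h * g`.
-/

theorem smul_ne_self_of_mem_iUnion_smul {G X : Type*} [Group G] [MulAction G X]
    {H : Subgroup G} {S : Set X} (hS : ∀ h ∈ H, h ≠ 1 → ∀ x ∈ S, h • x ≠ x) :
    ∀ h ∈ H, h ≠ 1 → ∀ z ∈ ⋃ g ∈ H, g • S, h • z ≠ z := by
  intro h hh h_ne z hz h_fix
  obtain ⟨g, hg, u, hu, rfl⟩ : ∃ g ∈ H, ∃ u ∈ S, g • u = z := by
    simpa only [Set.mem_iUnion, exists_prop, Set.mem_smul_set] using hz
  have conj_mem : g⁻¹ * h * g ∈ H := mul_mem (mul_mem (inv_mem hg) hh) hg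
  have conj_ne : g⁻¹ * h * g ≠ 1 := by
    simpa only [inv_inv] using (conj_eq_one_iff (a := g⁻¹)).not.mpr h_ne
  have conj_fix : (g⁻¹ * h * g) • u = u := by
    rw [mul_smul, mul_smul, inv_smul_eq_iff, h_fix]
  exact hS _ conj_mem conj_ne u hu conj_fix

/-- The value in `G` of a letter of a word in the generators `f i`. As in `FreeGroup.mk`, the letter
`(i, true)` stands for `f i` and `(i, false)` for its inverse. -/
def letterValue {ι G : Type*} [Group G] (f : ι → G) (a : ι × Bool) : G :=
  bif a.2 then f a.1 else (f a.1)⁻¹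

/-- A ping-pong configuration for the family `f`: a base set `U₀`, and for each `i` the sets
`U (i, true)` and `U (i, false)` (written `Uᵢ⁺` and `Uᵢ⁻` on paper). Each letter `a` sends `U₀`, and
the set `U b` of every letter `b` other than the inverse of `a`, into `U a`; the exclusion of the
inverse is written `a.1 = b.1 → a.2 = b.2`, as in `FreeGroup.IsReduced`. -/
structure IsPingPong {ι G X : Type*} [Group G] [MulAction G X]
    (f : ι → G) (U₀ : Set X) (U : ι × Bool → Set X) : Prop where
  disjoint_base : ∀ a, Disjoint U₀ (U a)
  smul_base_subset : ∀ a, letterValue f a • U₀ ⊆ U a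
  smul_subset : ∀ a b, (a.1 = b.1 → a.2 = b.2) → letterValue f a • U b ⊆ U a

theorem lift_mk_cons {ι G : Type*} [Group G] (f : ι → G) (a : ι × Bool) (L : List (ι × Bool)) :
    FreeGroup.lift f (FreeGroup.mk (a :: L)) =
      letterValue f a * FreeGroup.lift f (FreeGroup.mk L) := by
  simp only [FreeGroup.lift_mk, List.map_cons, List.prod_cons, letterValue]

namespace IsPingPong

variable {ι G X : Type*} [Group G] [MulAction G X]
  {f : ι → G} {U₀ : Set X} {U : ι × Bool → Set X}

theorem lift_mk_cons_smul_subset (hU : IsPingPong f U₀ U) {a : ι × Bool} {L : List (ι × Bool)}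
    (hL : FreeGroup.IsReduced (a :: L)) :
    FreeGroup.lift f (FreeGroup.mk (a :: L)) • U₀ ⊆ U a := by
  induction L generalizing a with
  | nil =>
    rw [lift_mk_cons, ← FreeGroup.one_eq_mk, map_one, mul_one]
    exact hU.smul_base_subset a
  | cons b L ih =>
    obtain ⟨no_cancel, hbL⟩ := FreeGroup.isReduced_cons_cons.mp hL
    rw [lift_mk_cons, mul_smul]
    exact (Set.smul_set_mono (ih hbL)).trans (hU.smul_subset a b no_cancel)

theorem disjoint_lift_smul (hU : IsPingPong f U₀ U) {w : FreeGroup ι} (hw : w ≠ 1) :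
    Disjoint U₀ (FreeGroup.lift f w • U₀) := by
  classical
  obtain ⟨a, L, h_word⟩ := List.exists_cons_of_ne_nil (FreeGroup.toWord_eq_nil_iff.not.mpr hw)
  have h_red : FreeGroup.IsReduced (a :: L) := h_word ▸ FreeGroup.isReduced_toWord
  rw [← FreeGroup.mk_toWord (x := w), h_word]
  exact (hU.disjoint_base a).mono_right (hU.lift_mk_cons_smul_subset h_red)

theorem disjoint_smul_of_mem_closure (hU : IsPingPong f U₀ U) {h : G}
    (hh : h ∈ Subgroup.closure (Set.range f)) (h_ne : h ≠ 1) : Disjoint U₀ (h • U₀) := by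
  rw [← FreeGroup.range_lift_eq_closure] at hh
  obtain ⟨w, rfl⟩ := hh
  exact hU.disjoint_lift_smul (ne_of_apply_ne (FreeGroup.lift f) (by rwa [map_one]))

theorem pair {f₁ f₂ : G} {U₁p U₁m U₂p U₂m : Set X}
    (d₁p : Disjoint U₀ U₁p) (d₁m : Disjoint U₀ U₁m) (d₂p : Disjoint U₀ U₂p) (d₂m : Disjoint U₀ U₂m)
    (h₁ : f₁ • (U₀ ∪ U₁p ∪ U₂p ∪ U₂m) ⊆ U₁p) (h₁' : f₁⁻¹ • (U₀ ∪ U₁m ∪ U₂p ∪ U₂m) ⊆ U₁m)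
    (h₂ : f₂ • (U₀ ∪ U₂p ∪ U₁p ∪ U₁m) ⊆ U₂p) (h₂' : f₂⁻¹ • (U₀ ∪ U₂m ∪ U₁p ∪ U₁m) ⊆ U₂m) :
    IsPingPong ![f₁, f₂] U₀ fun a ↦ bif a.2 then ![U₁p, U₂p] a.1 else ![U₁m, U₂m] a.1 := by
  simp only [Set.smul_set_union, Set.union_subset_iff] at h₁ h₁' h₂ h₂'
  constructor <;> simp [Prod.forall, Fin.forall_fin_two, Bool.forall_bool, letterValue, *]

end IsPingPong

theorem stmt_7_general {ι G X : Type*} [Group G] [MulAction G X]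
    {f : ι → G} {U₀ : Set X} {U : ι × Bool → Set X} (hU : IsPingPong f U₀ U) :
    ∀ h ∈ Subgroup.closure (Set.range f), h ≠ 1 →
      ∀ z ∈ ⋃ g ∈ Subgroup.closure (Set.range f), g • U₀, h • z ≠ z :=
  smul_ne_self_of_mem_iUnion_smul fun _h hh h_ne _u hu ↦
    ((hU.disjoint_smul_of_mem_closure hh h_ne).ne_of_mem hu (Set.smul_mem_smul_set hu)).symm

theorem stmt_7 {G X : Type*} [Group G] [MulAction G X]
    (f1 f2 : G) (U0 U1p U1m U2p U2m : Set X)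
    (hU0 : U0.Nonempty) (hU1p : U1p.Nonempty) (hU1m : U1m.Nonempty)
    (hU2p : U2p.Nonempty) (hU2m : U2m.Nonempty)
    (d01p : Disjoint U0 U1p) (d01m : Disjoint U0 U1m)
    (d02p : Disjoint U0 U2p) (d02m : Disjoint U0 U2m)
    (d1p1m : Disjoint U1p U1m) (d1p2p : Disjoint U1p U2p) (d1p2m : Disjoint U1p U2m)
    (d1m2p : Disjoint U1m U2p) (d1m2m : Disjoint U1m U2m)
    (d2p2m : Disjoint U2p U2m)
    (hf1 : f1 • (U0 ∪ U1p ∪ U2p ∪ U2m) ⊆ U1p)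
    (hf1' : f1⁻¹ • (U0 ∪ U1m ∪ U2p ∪ U2m) ⊆ U1m)
    (hf2 : f2 • (U0 ∪ U2p ∪ U1p ∪ U1m) ⊆ U2p)
    (hf2' : f2⁻¹ • (U0 ∪ U2m ∪ U1p ∪ U1m) ⊆ U2m) :
    ∀ h ∈ Subgroup.closure {f1, f2}, h ≠ 1 →
      ∀ z ∈ ⋃ g ∈ (Subgroup.closure {f1, f2} : Subgroup G), g • U0, h • z ≠ z := by
  simpa only [Matrix.range_cons_cons_empty] using
    stmt_7_general (IsPingPong.pair d01p d01m d02p d02m hf1 hf1' hf2 hf2')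
end

section
/- Let F be the free group on two generators a and b (F = FreeGroup Bool with a = FreeGroup.of false and b = FreeGroup.of true). Let A' ⊆ F be the set of nontrivial elements whose reduced word begins with the letter a or a⁻¹, i.e., A' = {g : F | ∃ (s : Bool) (t : List (Bool × Bool)), FreeGroup.toWord g = (false, s) :: t}. Then: (1) F = A' ∪ a • A', where a • A' = {a * g | g ∈ A'}; and (2) the three sets A', b • A' = {b * g | g ∈ A'}, and b² • A' = {b² * g | g ∈ A'} are pairwise disjoint. -/
open Pointwise

/-!
Write `S c` for the set of elements whose reduced word begins with `c` or `c⁻¹`. Everything rests on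
one ping-pong fact: for `n ≠ 0`, multiplication by `c ^ n` maps the complement of `S c` into `S c`,
because no cancellation can occur. For `c = a` and the exponent `-n`, this says that every element
outside `S a` lies in `a ^ n • S a`. For `c = b ≠ a`, multiplication by `b ^ n` sends `S a`, which
lies in the complement of `S b`, into `S b`, which is disjoint from `S a`; translating by powers of
`b` makes all the sets `b ^ n • S a` pairwise disjoint.
-/

section

open FreeGroup Function

variable {α : Type*} [DecidableEq α] {a b : α} {g : FreeGroup α} {n : ℤ}

/-- The set of elements of the free group whose reduced word begins with the generator `a` or its
inverse, expressed through the sets `FreeGroup.startsWith` of elements with a given first letter. -/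
def startsWithGenerator (a : α) : Set (FreeGroup α) :=
  ⋃ s : Bool, startsWith (a, s)

lemma mem_startsWithGenerator : g ∈ startsWithGenerator a ↔ ∃ s, g ∈ startsWith (a, s) :=
  Set.mem_iUnion

lemma startsWithGenerator_eq_setOf_toWord_eq_cons (a : α) :
    startsWithGenerator a = {g | ∃ s t, toWord g = (a, s) :: t} := by
  ext g
  simp only [mem_startsWithGenerator, startsWith, Set.mem_ofPred_eq, ← List.head?_eq_getElem?,
    List.head?_eq_some_iff]

lemma disjoint_startsWithGenerator (hab : a ≠ b) :
    Disjoint (startsWithGenerator a) (startsWithGenerator b) := by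
  simp [startsWithGenerator, hab]

lemma mk_singleton_pow_mul_mem_startsWith {w : α × Bool} (hg : g ∉ startsWith (w.1, !w.2))
    {k : ℕ} (hk : k ≠ 0) : mk [w] ^ k * g ∈ startsWith w := by
  induction k, Nat.one_le_iff_ne_zero.mpr hk using Nat.le_induction with
  | base => simpa only [pow_one] using startsWith_mk_mul g hg
  | succ k hk ih =>
    have hne : w ≠ (w.1, !w.2) := by simp [Prod.ext_iff]
    have not_mem : mk [w] ^ k * g ∉ startsWith (w.1, !w.2) :=
      (startsWith.disjoint_iff_ne.mpr hne).notMem_of_mem_left (ih (by lia))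
    simpa only [pow_succ', mul_assoc] using startsWith_mk_mul _ not_mem

lemma of_zpow_mul_mem_startsWithGenerator (hg : g ∉ startsWithGenerator a) (hn : n ≠ 0) :
    of a ^ n * g ∈ startsWithGenerator a := by
  simp only [mem_startsWithGenerator, not_exists] at hg ⊢
  have mk_pow_mem (s : Bool) {k : ℕ} (hk : k ≠ 0) : mk [(a, s)] ^ k * g ∈ startsWith (a, s) :=
    mk_singleton_pow_mul_mem_startsWith (hg !s) hk
  obtain ⟨k, rfl | rfl⟩ := n.eq_nat_or_neg
  · refine ⟨true, ?_⟩
    rw [zpow_natCast]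
    exact mk_pow_mem true (by lia)
  · refine ⟨false, ?_⟩
    rw [zpow_neg, zpow_natCast, ← inv_pow]
    exact mk_pow_mem false (by lia)

lemma startsWithGenerator_union_of_zpow_smul (a : α) (hn : n ≠ 0) :
    startsWithGenerator a ∪ of a ^ n • startsWithGenerator a = Set.univ := by
  refine Set.eq_univ_of_forall fun g ↦ or_iff_not_imp_left.mpr fun hg ↦ ?_
  rw [Set.mem_smul_set_iff_inv_smul_mem, smul_eq_mul, ← zpow_neg]
  exact of_zpow_mul_mem_startsWithGenerator hg (neg_ne_zero.mpr hn)

lemma of_zpow_smul_startsWithGenerator_subset (hab : a ≠ b) (hn : n ≠ 0) :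
    of b ^ n • startsWithGenerator a ⊆ startsWithGenerator b := by
  rintro _ ⟨g, hg, rfl⟩
  exact of_zpow_mul_mem_startsWithGenerator
    ((disjoint_startsWithGenerator hab).notMem_of_mem_left hg) hn

lemma pairwise_disjoint_of_zpow_smul_startsWithGenerator (hab : a ≠ b) :
    Pairwise (Disjoint on fun n : ℤ ↦ of b ^ n • startsWithGenerator a) := by
  intro m n hmn
  have translate : of b ^ n • startsWithGenerator a =
      of b ^ m • of b ^ (n - m) • startsWithGenerator a := by
    rw [smul_smul, ← zpow_add, add_sub_cancel]
  rw [onFun, translate, Set.disjoint_smul_set]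
  exact (disjoint_startsWithGenerator hab).mono_right
    (of_zpow_smul_startsWithGenerator_subset hab (sub_ne_zero.mpr hmn.symm))

theorem stmt_9_general (hab : a ≠ b) :
    (∀ n : ℤ, n ≠ 0 → startsWithGenerator a ∪ of a ^ n • startsWithGenerator a = Set.univ) ∧
    Pairwise (Disjoint on fun n : ℤ ↦ of b ^ n • startsWithGenerator a) :=
  ⟨fun _ ↦ startsWithGenerator_union_of_zpow_smul a,
    pairwise_disjoint_of_zpow_smul_startsWithGenerator hab⟩

end

theorem stmt_9 (A' : Set (FreeGroup Bool))
    (hA' : A' = {g : FreeGroup Bool |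
      ∃ (s : Bool) (t : List (Bool × Bool)), FreeGroup.toWord g = (false, s) :: t}) :
    (Set.univ : Set (FreeGroup Bool)) = A' ∪ (FreeGroup.of false) • A' ∧
    Disjoint A' ((FreeGroup.of true) • A') ∧
    Disjoint A' ((FreeGroup.of true ^ 2) • A') ∧
    Disjoint ((FreeGroup.of true) • A') ((FreeGroup.of true ^ 2) • A') := by
  obtain rfl := hA'.trans (startsWithGenerator_eq_setOf_toWord_eq_cons false).symm
  obtain ⟨cover, disjoint⟩ := stmt_9_general Bool.false_ne_true
  exact ⟨by simpa using (cover 1 one_ne_zero).symm,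
    by simpa [Function.onFun] using @disjoint 0 1 (by decide),
    by simpa [Function.onFun, zpow_ofNat] using @disjoint 0 2 (by decide),
    by simpa [Function.onFun, zpow_ofNat] using @disjoint 1 2 (by decide)⟩
end

section
/- A group G contains a free subgroup of rank 2 (i.e., there exists an injective group homomorphism from the free group on two generators into G) if and only if there exist a subset A ⊆ G and elements a, b, c ∈ G such that G = A ∪ aA (where aA = {a * g | g ∈ A}) and the three sets A, bA, cA are pairwise disjoint. -/
open Pointwise

/-!
If `G = A ∪ aA` then `a` and `a⁻¹` both map the complement of `A` into `A`, and the conjugates of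
`a` by `b` and `c` do the same for `bA` and `cA`. Hence `s = a` and `t = bab⁻¹` play ping-pong on
three disjoint sets: `st` sends the complement of `bA` into `A`, its inverse sends the complement
of `A` into `bA`, and conjugating `st` by `u = cac⁻¹` moves both `A` and `bA` inside `cA`. So `st`
and `u(st)u⁻¹` generate a free group.

Conversely, in the free group on `x` and `y` let `A` be the set of reduced words starting with
`x` or `x⁻¹`, and take `a = x`, `b = y`, `c = y⁻¹`. This configuration is pulled back to any free
action along an equivariant map to the free group.
-/

section MulAction

variable {G X : Type*} [Group G] [MulAction G X]

/-- `A` is a subset of a `G`-set such that `A` and `a • A` cover the whole space while the three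
translates `A`, `b • A`, `c • A` are pairwise disjoint. -/
def IsTwoCoverThreePacking (A : Set X) (a b c : G) : Prop :=
  Set.univ = A ∪ a • A ∧ Disjoint A (b • A) ∧ Disjoint A (c • A) ∧ Disjoint (b • A) (c • A)

theorem smul_compl_subset_iff_univ_eq_union {A : Set X} {a : G} :
    a • Aᶜ ⊆ A ↔ Set.univ = A ∪ a • A := by
  rw [Set.smul_set_compl, Set.compl_subset_iff_union, Set.union_comm, eq_comm]

theorem inv_smul_compl_subset_iff {A B : Set X} {a : G} : a⁻¹ • Aᶜ ⊆ B ↔ a • Bᶜ ⊆ A := by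
  rw [← Set.subset_smul_set_iff, Set.compl_subset_comm, Set.smul_set_compl]

theorem conj_smul_compl_subset {A B : Set X} {a : G} (h : a • Aᶜ ⊆ B) (g : G) :
    (g * a * g⁻¹) • (g • A)ᶜ ⊆ g • B := by
  calc
    (g * a * g⁻¹) • (g • A)ᶜ = g • a • Aᶜ := by
      rw [← Set.smul_set_compl, smul_smul, inv_mul_cancel_right, mul_smul]
    _ ⊆ g • B := Set.smul_set_mono h

theorem mul_smul_compl_subset_of_disjoint {A B : Set X} {s t : G} (hAB : Disjoint A B)
    (hs : s • Aᶜ ⊆ A) (ht : t • Bᶜ ⊆ B) : (s * t) • Bᶜ ⊆ A :=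
  calc
    (s * t) • Bᶜ = s • t • Bᶜ := mul_smul s t _
    _ ⊆ s • Aᶜ := Set.smul_set_mono (ht.trans hAB.subset_compl_left)
    _ ⊆ A := hs

theorem IsTwoCoverThreePacking.nonempty [Nonempty X] {A : Set X} {a b c : G}
    (h : IsTwoCoverThreePacking A a b c) : A.Nonempty := by
  by_contra hA
  have hcover := h.1
  simp [Set.not_nonempty_iff_eq_empty.mp hA] at hcover

theorem IsTwoCoverThreePacking.preimage {Y : Type*} [MulAction G Y] {A : Set Y} {a b c : G}
    (h : IsTwoCoverThreePacking A a b c) (f : X →[G] Y) :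
    IsTwoCoverThreePacking (f ⁻¹' A) a b c := by
  obtain ⟨hcover, hAB, hAC, hBC⟩ := h
  simp only [IsTwoCoverThreePacking, ← Group.preimage_smul_set f]
  refine ⟨?_, hAB.preimage f, hAC.preimage f, hBC.preimage f⟩
  rw [← Set.preimage_union, ← hcover, Set.preimage_univ]

variable (G X) in
theorem nonempty_mulActionHom_of_isCancelSMul [IsCancelSMul G X] : Nonempty (X →[G] G) := by
  let r (x : X) : X := (Quotient.mk (MulAction.orbitRel G X) x).out
  have hr (x : X) : ∃ g : G, g • r x = x := (MulAction.orbitRel G X).symm (Quotient.mk_out x)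
  have r_smul (g : G) (x : X) : r (g • x) = r x :=
    congrArg Quotient.out (Quotient.sound (MulAction.mem_orbit x g))
  choose p hp using hr
  refine ⟨⟨p, fun g x => IsCancelSMul.right_cancel _ _ (r x) ?_⟩⟩
  calc
    p (g • x) • r x = p (g • x) • r (g • x) := by rw [r_smul]
    _ = g • x := hp _
    _ = (g • p x) • r x := by rw [smul_assoc, hp]

end MulAction

section PingPong

variable {G X : Type*} [Group G] [MulAction G X]

/-- `FreeGroup.injective_lift_of_ping_pong` requires `ι` and `G` to live in the same universe. -/
theorem injective_freeGroupLift_of_ping_pong {ι : Type} [Nontrivial ι] (a : ι → G)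
    (U V : ι → Set X) (hU : ∀ i, (U i).Nonempty) (hUU : Pairwise (Function.onFun Disjoint U))
    (hVV : Pairwise (Function.onFun Disjoint V)) (hUV : ∀ i j, Disjoint (U i) (V j))
    (hVU : ∀ i, a i • (V i)ᶜ ⊆ U i) : Function.Injective (FreeGroup.lift a) := by
  have hlift : FreeGroup.lift a = (FreeGroup.lift fun i : ULift ι => a i.down).comp
      (FreeGroup.freeGroupCongr Equiv.ulift.symm).toMonoidHom := by
    ext i; simp
  rw [hlift, MonoidHom.coe_comp]
  refine Function.Injective.comp ?_ (MulEquiv.injective _)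
  exact FreeGroup.injective_lift_of_ping_pong _ (fun i => U i.down) (fun i => V i.down)
    (fun i => hU i.down) (hUU.comp_of_injective ULift.down_injective)
    (hVV.comp_of_injective ULift.down_injective) (fun i j => hUV i.down j.down)
    (fun i => hVU i.down) (fun i => inv_smul_compl_subset_iff.mpr (hVU i.down))

theorem injective_freeGroupLift_conj_of_ping_pong {ι : Type} [Nontrivial ι] {g : G} {A B : Set X}
    (hA : A.Nonempty) (hAB : Disjoint A B) (hg : g • Bᶜ ⊆ A) (h : ι → G)
    (hdisj : Pairwise (Function.onFun Disjoint fun i => h i • (A ∪ B))) :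
    Function.Injective (FreeGroup.lift fun i => h i * g * (h i)⁻¹) := by
  have hA_sub (i : ι) : h i • A ⊆ h i • (A ∪ B) := Set.smul_set_mono Set.subset_union_left
  have hB_sub (i : ι) : h i • B ⊆ h i • (A ∪ B) := Set.smul_set_mono Set.subset_union_right
  refine injective_freeGroupLift_of_ping_pong _ (fun i => h i • A) (fun i => h i • B)
    (fun i => hA.smul_set) (fun i j hij => (hdisj hij).mono (hA_sub i) (hA_sub j))
    (fun i j hij => (hdisj hij).mono (hB_sub i) (hB_sub j)) (fun i j => ?_)
    (fun i => conj_smul_compl_subset hg (h i))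
  obtain rfl | hij := eq_or_ne i j
  · exact Set.disjoint_smul_set.mpr hAB
  · exact (hdisj hij).mono (hA_sub i) (hB_sub j)

theorem exists_injective_freeGroup_of_three_smul_compl_subset {s t u : G} {A B C : Set X}
    (hA : A.Nonempty) (hAB : Disjoint A B) (hAC : Disjoint A C) (hBC : Disjoint B C)
    (hs : s • Aᶜ ⊆ A) (ht : t • Bᶜ ⊆ B) (hu : u • Cᶜ ⊆ C) :
    ∃ φ : FreeGroup Bool →* G, Function.Injective φ := by
  have hABC : Disjoint (A ∪ B) C := Disjoint.union_left hAC hBC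
  have hdisj : Disjoint (A ∪ B) (u • (A ∪ B)) :=
    hABC.mono_right ((Set.smul_set_mono hABC.subset_compl_right).trans hu)
  let h (i : Bool) : G := if i then u else 1
  refine ⟨_, injective_freeGroupLift_conj_of_ping_pong hA hAB
    (mul_smul_compl_subset_of_disjoint hAB hs ht) h ?_⟩
  rintro (_ | _) (_ | _) hij
  · contradiction
  · simpa [h, Function.onFun] using hdisj
  · simpa [h, Function.onFun] using hdisj.symm
  · contradiction

theorem IsTwoCoverThreePacking.exists_injective_freeGroup [Nonempty X] {A : Set X} {a b c : G}
    (h : IsTwoCoverThreePacking A a b c) : ∃ φ : FreeGroup Bool →* G, Function.Injective φ := by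
  have hA : A.Nonempty := h.nonempty
  obtain ⟨hcover, hAB, hAC, hBC⟩ := h
  have ha : a • Aᶜ ⊆ A := smul_compl_subset_iff_univ_eq_union.mpr hcover
  exact exists_injective_freeGroup_of_three_smul_compl_subset hA hAB hAC hBC ha
    (conj_smul_compl_subset ha b) (conj_smul_compl_subset ha c)

end PingPong

section FreeGroup

open FreeGroup (of startsWith)

theorem mk_smul_subset_startsWith {α : Type*} [DecidableEq α] {w : α × Bool}
    {S : Set (FreeGroup α)} (hS : Disjoint S (startsWith (w.1, !w.2))) :
    FreeGroup.mk [w] • S ⊆ startsWith w := by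
  rintro _ ⟨f, hf, rfl⟩
  exact FreeGroup.startsWith_mk_mul f (hS.notMem_of_mem_left hf)

theorem isTwoCoverThreePacking_startsWith {α : Type*} [DecidableEq α] {i j : α}
    (hij : i ≠ j) :
    IsTwoCoverThreePacking (startsWith (i, true) ∪ startsWith (i, false))
      (of i) (of j) (of j)⁻¹ := by
  set A : Set (FreeGroup α) := startsWith (i, true) ∪ startsWith (i, false)
  have disjoint_A (ε : Bool) : Disjoint A (startsWith (j, ε)) := by
    simp [A, Set.disjoint_union_left, hij]
  have smul_A : of j • A ⊆ startsWith (j, true) := mk_smul_subset_startsWith (disjoint_A false)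
  have inv_smul_A : (of j)⁻¹ • A ⊆ startsWith (j, false) :=
    mk_smul_subset_startsWith (disjoint_A true)
  refine ⟨smul_compl_subset_iff_univ_eq_union.mp ?_, (disjoint_A true).mono_right smul_A,
    (disjoint_A false).mono_right inv_smul_A,
    (FreeGroup.startsWith.disjoint_iff_ne.mpr (by simp)).mono smul_A inv_smul_A⟩
  have hA : Disjoint Aᶜ (startsWith (i, false)) :=
    disjoint_compl_left.mono_right Set.subset_union_right
  exact (mk_smul_subset_startsWith hA).trans Set.subset_union_left

theorem exists_isTwoCoverThreePacking_of_injective {α : Type*} [Nontrivial α] {G : Type*} [Group G]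
    (X : Type*) [MulAction G X] [IsCancelSMul G X] {φ : FreeGroup α →* G}
    (hφ : Function.Injective φ) :
    ∃ (A : Set X) (a b c : G), IsTwoCoverThreePacking A a b c := by
  classical
  let : MulAction (FreeGroup α) X := MulAction.compHom X φ
  have : IsCancelSMul (FreeGroup α) X :=
    ⟨fun f g x hfg => hφ (IsCancelSMul.right_cancel (φ f) (φ g) x hfg)⟩
  obtain ⟨p⟩ := nonempty_mulActionHom_of_isCancelSMul (FreeGroup α) X
  obtain ⟨i, j, hij⟩ := exists_pair_ne α
  exact ⟨_, φ (of i), φ (of j), φ (of j)⁻¹, (isTwoCoverThreePacking_startsWith hij).preimage p⟩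

end FreeGroup

theorem stmt_11_general {G X : Type*} [Group G] [MulAction G X] [IsCancelSMul G X] [Nonempty X] :
    (∃ φ : FreeGroup Bool →* G, Function.Injective φ) ↔
    ∃ (A : Set X) (a b c : G), IsTwoCoverThreePacking A a b c :=
  ⟨fun ⟨_, hφ⟩ => exists_isTwoCoverThreePacking_of_injective X hφ,
    fun ⟨_, _, _, _, h⟩ => h.exists_injective_freeGroup⟩

theorem stmt_11 {G : Type*} [Group G] :
    (∃ φ : FreeGroup Bool →* G, Function.Injective φ) ↔
    ∃ (A : Set G) (a b c : G),
      (Set.univ : Set G) = A ∪ a • A ∧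
      Disjoint A (b • A) ∧ Disjoint A (c • A) ∧ Disjoint (b • A) (c • A) :=
  stmt_11_general
end

section
/- Let A ⊆ ℝ² be the set A = {(x, y) | x > 0 ∧ y ≥ 0} ∪ {(x, y) | x < 0 ∧ y ≤ 0}, and let α, β, γ, δ be real numbers with α, β, γ, δ > 0, αβ ≥ 1, and γδ ≥ 1. Consider the matrices in SL(2, ℝ): a = [[0, -1], [1, 0]], a₀ = [[1, α], [0, 1]], a₁ = [[1, 0], [β, 1]], a₂ = [[0, -1], [1, γ]], a₃ = [[-δ, -1], [1, 0]], acting linearly on ℝ². Then ℝ² \ {(0,0)} = A ∪ a • A, and the four sets a₀ • A, a₁ • A, a₂ • A, a₃ • A are pairwise disjoint. -/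
open Pointwise

/-!
Call `A` the double quadrant. It and its image `B` under the quarter turn `a` partition the nonzero
vectors. Any matrix with the sign pattern `[[≤ 0, ≤ 0], [> 0, ≥ 0]]` of the quarter turn maps `A`
into `B`. For `i < j` the quotient `aᵢ⁻¹ aⱼ` has this pattern: projectively, the sets `aᵢ • A` are
consecutive half-open arcs, and `αβ ≥ 1` and `γδ ≥ 1` say that `a₀ • A` ends before `a₁ • A` starts
and `a₂ • A` before `a₃ • A`. Hence `A` is disjoint from `aᵢ⁻¹ aⱼ • A`, so `aᵢ • A` from `aⱼ • A`.
-/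

open scoped Matrix

section Definitions

variable (R : Type*) [Zero R] [Preorder R]

/-- The set `A` of the theorem: the union of two opposite half-open quadrants, that is, the cone
over the directions of nonnegative finite slope. -/
def doubleQuadrant : Set (Fin 2 → R) :=
  {v | 0 < v 0 ∧ 0 ≤ v 1} ∪ {v | v 0 < 0 ∧ v 1 ≤ 0}

/-- The double quadrant rotated by a quarter turn: the cone over the directions of negative or
infinite slope. -/
def turnedDoubleQuadrant : Set (Fin 2 → R) :=
  {v | v 0 ≤ 0 ∧ 0 < v 1} ∪ {v | 0 ≤ v 0 ∧ v 1 < 0}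

variable {R}

/-- A matrix with the sign pattern of the quarter turn `!![0, -1; 1, 0]`. Only the lower left entry
has to be nonzero, because the double quadrant contains the first axis but not the second. -/
structure HasQuarterTurnSigns (g : Matrix (Fin 2) (Fin 2) R) : Prop where
  nonpos_zero_zero : g 0 0 ≤ 0
  nonpos_zero_one : g 0 1 ≤ 0
  pos_one_zero : 0 < g 1 0
  nonneg_one_one : 0 ≤ g 1 1

lemma disjoint_doubleQuadrant_turnedDoubleQuadrant :
    Disjoint (doubleQuadrant R) (turnedDoubleQuadrant R) := by
  rw [Set.disjoint_left]
  rintro v (⟨hx, hy⟩ | ⟨hx, hy⟩) (⟨hx', hy'⟩ | ⟨hx', hy'⟩)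
  exacts [hx.not_ge hx', hy'.not_ge hy, hy'.not_ge hy, hx.not_ge hx']

end Definitions

lemma doubleQuadrant_union_turnedDoubleQuadrant {R : Type*} [Zero R] [LinearOrder R] :
    doubleQuadrant R ∪ turnedDoubleQuadrant R = {v | v ≠ 0} := by
  ext v
  simp only [doubleQuadrant, turnedDoubleQuadrant, Set.mem_union, Set.mem_ofPred_eq, ne_eq,
    funext_iff, Fin.forall_fin_two, Pi.zero_apply]
  grind

lemma image_quarterTurn_doubleQuadrant {R : Type*} [Ring R] [PartialOrder R] [IsOrderedRing R] :
    (fun v => !![0, -1; 1, 0] *ᵥ v) '' doubleQuadrant R = turnedDoubleQuadrant R := by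
  have left_inv : Function.LeftInverse (fun v : Fin 2 → R => ![v 1, -v 0])
      (fun v => !![0, -1; 1, 0] *ᵥ v) := fun v => by
    ext i; fin_cases i <;> simp [Matrix.mulVec, dotProduct]
  have right_inv : Function.RightInverse (fun v : Fin 2 → R => ![v 1, -v 0])
      (fun v => !![0, -1; 1, 0] *ᵥ v) := fun v => by
    ext i; fin_cases i <;> simp [Matrix.mulVec, dotProduct]
  rw [Set.image_eq_preimage_of_inverse left_inv right_inv]
  ext v
  simp [doubleQuadrant, turnedDoubleQuadrant, and_comm]

lemma HasQuarterTurnSigns.mapsTo {R : Type*} [Ring R] [PartialOrder R] [IsStrictOrderedRing R]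
    {g : Matrix (Fin 2) (Fin 2) R} (hg : HasQuarterTurnSigns g) :
    Set.MapsTo (fun v => g *ᵥ v) (doubleQuadrant R) (turnedDoubleQuadrant R) := by
  obtain ⟨h₀₀, h₀₁, h₁₀, h₁₁⟩ := hg
  rintro v (⟨hx, hy⟩ | ⟨hx, hy⟩)
  · left
    simp only [Set.mem_ofPred_eq, Matrix.mulVec, dotProduct, Fin.sum_univ_two]
    exact ⟨add_nonpos (mul_nonpos_of_nonpos_of_nonneg h₀₀ hx.le)
      (mul_nonpos_of_nonpos_of_nonneg h₀₁ hy),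
      add_pos_of_pos_of_nonneg (mul_pos h₁₀ hx) (mul_nonneg h₁₁ hy)⟩
  · right
    simp only [Set.mem_ofPred_eq, Matrix.mulVec, dotProduct, Fin.sum_univ_two]
    exact ⟨add_nonneg (mul_nonneg_of_nonpos_of_nonpos h₀₀ hx.le)
      (mul_nonneg_of_nonpos_of_nonpos h₀₁ hy),
      add_neg_of_neg_of_nonpos (mul_neg_of_pos_of_neg h₁₀ hx)
        (mul_nonpos_of_nonneg_of_nonpos h₁₁ hy)⟩

lemma HasQuarterTurnSigns.disjoint_image_image {R : Type*} [CommRing R] [PartialOrder R]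
    [IsStrictOrderedRing R] {g : Matrix (Fin 2) (Fin 2) R} (hg : HasQuarterTurnSigns g)
    {M N : Matrix (Fin 2) (Fin 2) R} (hM : IsUnit M) (hN : N = M * g) :
    Disjoint ((fun v => M *ᵥ v) '' doubleQuadrant R) ((fun v => N *ᵥ v) '' doubleQuadrant R) := by
  have image_N : (fun v => N *ᵥ v) '' doubleQuadrant R =
      (fun v => M *ᵥ v) '' ((fun v => g *ᵥ v) '' doubleQuadrant R) := by
    simp only [hN, Set.image_image, Matrix.mulVec_mulVec]
  rw [image_N, Set.disjoint_image_iff (Matrix.mulVec_injective_of_isUnit hM)]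
  exact disjoint_doubleQuadrant_turnedDoubleQuadrant.mono_right hg.mapsTo.image_subset

theorem stmt_12_general {R : Type*} [CommRing R] [LinearOrder R] [IsStrictOrderedRing R]
    (α β γ δ : R) (hα : 0 < α) (hβ : 0 < β) (hγ : 0 < γ) (hδ : 0 < δ)
    (hαβ : 1 ≤ α * β) (hγδ : 1 ≤ γ * δ)
    (A : Set (Fin 2 → R))
    (hA : A = {v | 0 < v 0 ∧ 0 ≤ v 1} ∪ {v | v 0 < 0 ∧ v 1 ≤ 0})
    (a a0 a1 a2 a3 : Matrix.SpecialLinearGroup (Fin 2) R)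
    (ha : a = ⟨!![0, -1; 1, 0], by simp [Matrix.det_fin_two_of]⟩)
    (ha0 : a0 = ⟨!![1, α; 0, 1], by simp [Matrix.det_fin_two_of]⟩)
    (ha1 : a1 = ⟨!![1, 0; β, 1], by simp [Matrix.det_fin_two_of]⟩)
    (ha2 : a2 = ⟨!![0, -1; 1, γ], by simp [Matrix.det_fin_two_of]⟩)
    (ha3 : a3 = ⟨!![-δ, -1; 1, 0], by simp [Matrix.det_fin_two_of]⟩) :
    {v : Fin 2 → R | v ≠ 0} = A ∪ ((fun v => a.val *ᵥ v) '' A) ∧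
    Disjoint ((fun v => a0.val *ᵥ v) '' A) ((fun v => a1.val *ᵥ v) '' A) ∧
    Disjoint ((fun v => a0.val *ᵥ v) '' A) ((fun v => a2.val *ᵥ v) '' A) ∧
    Disjoint ((fun v => a0.val *ᵥ v) '' A) ((fun v => a3.val *ᵥ v) '' A) ∧
    Disjoint ((fun v => a1.val *ᵥ v) '' A) ((fun v => a2.val *ᵥ v) '' A) ∧
    Disjoint ((fun v => a1.val *ᵥ v) '' A) ((fun v => a3.val *ᵥ v) '' A) ∧
    Disjoint ((fun v => a2.val *ᵥ v) '' A) ((fun v => a3.val *ᵥ v) '' A) := by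
  obtain rfl : A = doubleQuadrant R := hA
  have isUnit_val (M : Matrix.SpecialLinearGroup (Fin 2) R) : IsUnit M.val :=
    (Matrix.isUnit_iff_isUnit_det _).2 (by simp)
  have signs₀₁ : HasQuarterTurnSigns !![1 - α * β, -α; β, 1] :=
    ⟨sub_nonpos.2 hαβ, neg_nonpos.2 hα.le, hβ, zero_le_one⟩
  have signs₀₂ : HasQuarterTurnSigns !![-α, -(1 + α * γ); 1, γ] :=
    ⟨neg_nonpos.2 hα.le, neg_nonpos.2 (by positivity), one_pos, hγ.le⟩
  have signs₀₃ : HasQuarterTurnSigns !![-(α + δ), -1; 1, 0] :=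
    ⟨neg_nonpos.2 (by positivity), neg_nonpos.2 zero_le_one, one_pos, le_rfl⟩
  have signs₁₂ : HasQuarterTurnSigns !![0, -1; 1, β + γ] :=
    ⟨le_rfl, neg_nonpos.2 zero_le_one, one_pos, (by positivity : 0 ≤ β + γ)⟩
  have signs₁₃ : HasQuarterTurnSigns !![-δ, -1; 1 + β * δ, β] :=
    ⟨neg_nonpos.2 hδ.le, neg_nonpos.2 zero_le_one, (by positivity : 0 < 1 + β * δ), hβ.le⟩
  have signs₂₃ : HasQuarterTurnSigns !![1 - γ * δ, -γ; δ, 1] :=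
    ⟨sub_nonpos.2 hγδ, neg_nonpos.2 hγ.le, hδ, zero_le_one⟩
  subst ha ha0 ha1 ha2 ha3
  refine ⟨by rw [image_quarterTurn_doubleQuadrant, doubleQuadrant_union_turnedDoubleQuadrant],
    signs₀₁.disjoint_image_image (isUnit_val _) ?_, signs₀₂.disjoint_image_image (isUnit_val _) ?_,
    signs₀₃.disjoint_image_image (isUnit_val _) ?_, signs₁₂.disjoint_image_image (isUnit_val _) ?_,
    signs₁₃.disjoint_image_image (isUnit_val _) ?_, signs₂₃.disjoint_image_image (isUnit_val _) ?_⟩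
  all_goals
    simp only [Matrix.mul_fin_two]
    ring_nf

theorem stmt_12 (α β γ δ : ℝ)
    (hα : 0 < α) (hβ : 0 < β) (hγ : 0 < γ) (hδ : 0 < δ)
    (hαβ : 1 ≤ α * β) (hγδ : 1 ≤ γ * δ)
    (A : Set (Fin 2 → ℝ))
    (hA : A = {v | 0 < v 0 ∧ 0 ≤ v 1} ∪ {v | v 0 < 0 ∧ v 1 ≤ 0})
    (a a0 a1 a2 a3 : Matrix.SpecialLinearGroup (Fin 2) ℝ)
    (ha : a = ⟨!![0, -1; 1, 0], by simp [Matrix.det_fin_two_of]⟩)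
    (ha0 : a0 = ⟨!![1, α; 0, 1], by simp [Matrix.det_fin_two_of]⟩)
    (ha1 : a1 = ⟨!![1, 0; β, 1], by simp [Matrix.det_fin_two_of]⟩)
    (ha2 : a2 = ⟨!![0, -1; 1, γ], by simp [Matrix.det_fin_two_of]⟩)
    (ha3 : a3 = ⟨!![-δ, -1; 1, 0], by simp [Matrix.det_fin_two_of]⟩) :
    {v : Fin 2 → ℝ | v ≠ 0} =
      A ∪ ((fun v => (a : Matrix (Fin 2) (Fin 2) ℝ).mulVec v) '' A) ∧
    Disjoint ((fun v => (a0 : Matrix (Fin 2) (Fin 2) ℝ).mulVec v) '' A)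
      ((fun v => (a1 : Matrix (Fin 2) (Fin 2) ℝ).mulVec v) '' A) ∧
    Disjoint ((fun v => (a0 : Matrix (Fin 2) (Fin 2) ℝ).mulVec v) '' A)
      ((fun v => (a2 : Matrix (Fin 2) (Fin 2) ℝ).mulVec v) '' A) ∧
    Disjoint ((fun v => (a0 : Matrix (Fin 2) (Fin 2) ℝ).mulVec v) '' A)
      ((fun v => (a3 : Matrix (Fin 2) (Fin 2) ℝ).mulVec v) '' A) ∧
    Disjoint ((fun v => (a1 : Matrix (Fin 2) (Fin 2) ℝ).mulVec v) '' A)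
      ((fun v => (a2 : Matrix (Fin 2) (Fin 2) ℝ).mulVec v) '' A) ∧
    Disjoint ((fun v => (a1 : Matrix (Fin 2) (Fin 2) ℝ).mulVec v) '' A)
      ((fun v => (a3 : Matrix (Fin 2) (Fin 2) ℝ).mulVec v) '' A) ∧
    Disjoint ((fun v => (a2 : Matrix (Fin 2) (Fin 2) ℝ).mulVec v) '' A)
      ((fun v => (a3 : Matrix (Fin 2) (Fin 2) ℝ).mulVec v) '' A) := by
  exact stmt_12_general α β γ δ hα hβ hγ hδ hαβ hγδ A hA a a0 a1 a2 a3 ha ha0 ha1 ha2 ha3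
end

section
/- Let α, β, γ, δ be real numbers with α, β, γ, δ > 0, αβ ≥ 1, and γδ ≥ 1. Then the matrices [[1, -α], [-γ, 1 + αγ]] and [[1 + βδ, -δ], [-β, 1]] in SL(2, ℝ) freely generate a free subgroup of rank 2; that is, the group homomorphism from the free group on two generators to SL(2, ℝ) sending the generators to these two matrices is injective. -/
/-!
`SL(2, K)` acts on the projective line `K ∪ {∞}` by Möbius transformations. The first matrix is
`[[1, 0], [-γ, 1]] * [[1, -α], [0, 1]]`: the translation `t ↦ t - α` sends the complement of
`[α, ∞)` to `(-∞, 0) ∪ {∞}`, which `t ↦ (t⁻¹ - γ)⁻¹` then sends into `[-γ⁻¹, 0)`. The second one is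
`[[1, -δ], [0, 1]] * [[1, 0], [-β, 1]]`, and sends the complement of `[0, β⁻¹)` into
`(-∞, -δ) ∪ {∞}`. Since `β⁻¹ ≤ α` and `γ⁻¹ ≤ δ`, these four sets are disjoint, and the two matrices
play ping-pong on them. The intervals are half-open so that disjointness survives the boundary cases
`α * β = 1` and `γ * δ = 1`.
-/

open Set Function Matrix OnePoint
open scoped MatrixGroups Pointwise

universe u v

theorem injective_freeGroupLift_of_smul_compl_subset {ι : Type u} {G : Type v} {Ω : Type*}
    [Nontrivial ι] [Group G] [MulAction G Ω] (a : ι → G) (X Y : ι → Set Ω)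
    (hXne : ∀ i, (X i).Nonempty) (hX : Pairwise (Disjoint on X)) (hY : Pairwise (Disjoint on Y))
    (hXY : ∀ i j, Disjoint (X i) (Y j)) (h : ∀ i, a i • (Y i)ᶜ ⊆ X i) :
    Injective (FreeGroup.lift a) := by
  -- Mathlib's ping-pong lemma needs `ι` and `G` in the same universe.
  let a' : ULift.{v} ι → ULift.{u} G := fun i ↦ ⟨a i.down⟩
  have ha' : Injective (FreeGroup.lift a') := by
    refine FreeGroup.injective_lift_of_ping_pong a' (X ∘ ULift.down) (Y ∘ ULift.down)
      (fun i ↦ hXne i.down) (hX.comp_of_injective ULift.down_injective)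
      (hY.comp_of_injective ULift.down_injective) (fun i j ↦ hXY i.down j.down)
      (fun i ↦ h i.down) fun i ↦ ?_
    rw [Pi.inv_apply, ← subset_smul_set_iff, compl_subset_comm, ← smul_set_compl]
    exact h i.down
  have hlift : FreeGroup.lift a = (MulEquiv.ulift.toMonoidHom.comp (FreeGroup.lift a')).comp
      (FreeGroup.freeGroupCongr Equiv.ulift.symm).toMonoidHom := by
    ext i
    rw [FreeGroup.lift_apply_of]
    exact congrArg ULift.down (FreeGroup.lift_apply_of (f := a')).symm
  rw [hlift]
  exact (MulEquiv.ulift.injective.comp ha').comp (MulEquiv.injective _)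

variable {K : Type*} [Field K]

section MobiusAction

variable [DecidableEq K]

/-- The action of `SL(2, K)` on the projective line `K ∪ {∞}` by Möbius transformations, restricted
from Mathlib's action of `GL(2, K)`. -/
instance mobiusAction : MulAction SL(2, K) (OnePoint K) :=
  MulAction.compHom _ SpecialLinearGroup.toGL

theorem mobius_smul_infty_of_ne_zero {g : SL(2, K)} (h : g 1 0 ≠ 0) :
    g • (∞ : OnePoint K) = ↑(g 0 0 / g 1 0) :=
  (smul_infty_eq_ite (g : GL (Fin 2) K)).trans (if_neg h)

theorem mobius_smul_coe_of_eq_zero {g : SL(2, K)} {t : K} (h : g 1 0 * t + g 1 1 = 0) :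
    g • (t : OnePoint K) = ∞ :=
  (smul_some_eq_ite (g := (g : GL (Fin 2) K))).trans (if_pos h)

theorem mobius_smul_coe_of_ne_zero {g : SL(2, K)} {t : K} (h : g 1 0 * t + g 1 1 ≠ 0) :
    g • (t : OnePoint K) = ↑((g 0 0 * t + g 0 1) / (g 1 0 * t + g 1 1)) :=
  (smul_some_eq_ite (g := (g : GL (Fin 2) K))).trans (if_neg h)

/-- The matrix `[[1, 0], [-γ, 1]] * [[1, -α], [0, 1]]`, the first generator of the free group. -/
def lowerMulUpper (α γ : K) : SL(2, K) :=
  ⟨!![1, -α; -γ, 1 + α * γ], by simp [det_fin_two_of]⟩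

/-- The matrix `[[1, -δ], [0, 1]] * [[1, 0], [-β, 1]]`, the second generator of the free group. -/
def upperMulLower (β δ : K) : SL(2, K) :=
  ⟨!![1 + β * δ, -δ; -β, 1], by simp [det_fin_two_of]; ring⟩

theorem lowerMulUpper_smul_infty (α : K) {γ : K} (hγ : γ ≠ 0) :
    lowerMulUpper α γ • (∞ : OnePoint K) = ↑(-γ⁻¹) := by
  have hne : lowerMulUpper α γ 1 0 ≠ 0 := neg_ne_zero.2 hγ
  rw [mobius_smul_infty_of_ne_zero hne]
  change ((1 / -γ : K) : OnePoint K) = ↑(-γ⁻¹)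
  rw [div_neg, one_div]

theorem lowerMulUpper_smul_coe {α γ t : K} (h : 1 - γ * (t - α) ≠ 0) :
    lowerMulUpper α γ • (t : OnePoint K) = ↑((t - α) / (1 - γ * (t - α))) := by
  have hnum : lowerMulUpper α γ 0 0 * t + lowerMulUpper α γ 0 1 = t - α := by
    change 1 * t + -α = _; ring
  have hden : lowerMulUpper α γ 1 0 * t + lowerMulUpper α γ 1 1 = 1 - γ * (t - α) := by
    change -γ * t + (1 + α * γ) = _; ring
  rw [mobius_smul_coe_of_ne_zero (hden ▸ h), hnum, hden]

theorem upperMulLower_smul_infty {β : K} (hβ : β ≠ 0) (δ : K) :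
    upperMulLower β δ • (∞ : OnePoint K) = ↑(-β⁻¹ - δ) := by
  have hne : upperMulLower β δ 1 0 ≠ 0 := neg_ne_zero.2 hβ
  rw [mobius_smul_infty_of_ne_zero hne]
  change (((1 + β * δ) / -β : K) : OnePoint K) = ↑(-β⁻¹ - δ)
  rw [div_neg, add_div, mul_div_cancel_left₀ _ hβ, one_div, neg_add']

theorem upperMulLower_smul_coe_of_eq_zero {β t : K} (h : 1 - β * t = 0) (δ : K) :
    upperMulLower β δ • (t : OnePoint K) = ∞ := by
  refine mobius_smul_coe_of_eq_zero ?_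
  change -β * t + 1 = 0
  linear_combination h

theorem upperMulLower_smul_coe_of_ne_zero {β t : K} (h : 1 - β * t ≠ 0) (δ : K) :
    upperMulLower β δ • (t : OnePoint K) = ↑(t / (1 - β * t) - δ) := by
  have hnum : upperMulLower β δ 0 0 * t + upperMulLower β δ 0 1 = t - δ * (1 - β * t) := by
    change (1 + β * δ) * t + -δ = _; ring
  have hden : upperMulLower β δ 1 0 * t + upperMulLower β δ 1 1 = 1 - β * t := by
    change -β * t + 1 = _; ring
  rw [mobius_smul_coe_of_ne_zero (hden ▸ h), hnum, hden, sub_div, mul_div_cancel_right₀ _ h]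

end MobiusAction

section PingPongSets

variable [LinearOrder K]

/-- The ping-pong sets into which the generators map: `[-γ⁻¹, 0)` for `lowerMulUpper` (index
`false`) and `(-∞, -δ) ∪ {∞}` for `upperMulLower` (index `true`). -/
def attractingSet (γ δ : K) (i : Bool) : Set (OnePoint K) :=
  bif i then insert ∞ ((↑) '' Iio (-δ)) else (↑) '' Ico (-γ⁻¹) 0

/-- The ping-pong sets outside of which the generators map into `attractingSet`: `[α, ∞)` for
`lowerMulUpper` (index `false`) and `[0, β⁻¹)` for `upperMulLower` (index `true`). -/
def repellingSet (α β : K) (i : Bool) : Set (OnePoint K) :=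
  bif i then (↑) '' Ico 0 β⁻¹ else (↑) '' Ici α

theorem pairwise_disjoint_repellingSet {α β : K} (h : β⁻¹ ≤ α) :
    Pairwise (Disjoint on repellingSet α β) := by
  refine pairwise_disjoint_on_bool.2 ((disjoint_image_iff coe_injective).2 ?_)
  exact disjoint_left.2 fun t ht ht' ↦ (ht.2.trans_le h).not_ge ht'

theorem repellingSet_subset {α : K} (hα : 0 ≤ α) (β : K) (i : Bool) :
    repellingSet α β i ⊆ (↑) '' Ici (0 : K) := by
  cases i
  exacts [image_mono (Ici_subset_Ici.2 hα), image_mono Ico_subset_Ici_self]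

variable [IsStrictOrderedRing K]

theorem attractingSet_nonempty {γ : K} (hγ : 0 < γ) (δ : K) (i : Bool) :
    (attractingSet γ δ i).Nonempty := by
  cases i
  · exact (nonempty_Ico.2 (neg_lt_zero.2 (inv_pos.2 hγ))).image _
  · exact insert_nonempty _ _

theorem pairwise_disjoint_attractingSet {γ δ : K} (h : γ⁻¹ ≤ δ) :
    Pairwise (Disjoint on attractingSet γ δ) := by
  refine pairwise_disjoint_on_bool.2 (disjoint_insert_left.2 ⟨infty_notMem_image_coe, ?_⟩)
  rw [disjoint_image_iff coe_injective]
  exact disjoint_left.2 fun t ht ht' ↦ (ht.trans_le (neg_le_neg h)).not_ge ht'.1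

theorem attractingSet_subset (γ : K) {δ : K} (hδ : 0 ≤ δ) (i : Bool) :
    attractingSet γ δ i ⊆ ((↑) '' Ici (0 : K))ᶜ := by
  rw [compl_image_coe, compl_Ici, union_singleton]
  cases i
  · exact (image_mono Ico_subset_Iio_self).trans (subset_insert _ _)
  · exact insert_subset_insert (image_mono (Iio_subset_Iio (neg_nonpos.2 hδ)))

theorem disjoint_attractingSet_repellingSet {α δ : K} (hα : 0 ≤ α) (hδ : 0 ≤ δ) (β γ : K)
    (i j : Bool) : Disjoint (attractingSet γ δ i) (repellingSet α β j) :=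
  disjoint_compl_left.mono (attractingSet_subset γ hδ i) (repellingSet_subset hα β j)

theorem lowerMulUpper_smul_compl_subset (α : K) {γ : K} (hγ : 0 < γ) :
    lowerMulUpper α γ • ((↑) '' Ici α : Set (OnePoint K))ᶜ ⊆ (↑) '' Ico (-γ⁻¹) 0 := by
  rw [compl_image_coe, compl_Ici]
  rintro _ ⟨_, ⟨t, ht, rfl⟩ | rfl, rfl⟩
  · have hneg : t - α < 0 := sub_neg.2 ht
    have hden : 0 < 1 - γ * (t - α) := by linarith [mul_neg_of_pos_of_neg hγ hneg]
    refine ⟨_, ⟨?_, div_neg_of_neg_of_pos hneg hden⟩, (lowerMulUpper_smul_coe hden.ne').symm⟩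
    calc -γ⁻¹ ≤ -γ⁻¹ + γ⁻¹ / (1 - γ * (t - α)) := by
          rw [le_add_iff_nonneg_right]; positivity
      _ = (t - α) / (1 - γ * (t - α)) := by field_simp; ring
  · exact ⟨-γ⁻¹, left_mem_Ico.2 (neg_lt_zero.2 (inv_pos.2 hγ)),
      (lowerMulUpper_smul_infty α hγ.ne').symm⟩

theorem upperMulLower_smul_compl_subset {β : K} (hβ : 0 < β) (δ : K) :
    upperMulLower β δ • ((↑) '' Ico 0 β⁻¹ : Set (OnePoint K))ᶜ ⊆
      insert ∞ ((↑) '' Iio (-δ)) := by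
  rw [compl_image_coe]
  rintro _ ⟨_, ⟨t, ht, rfl⟩ | rfl, rfl⟩
  · by_cases hden : 1 - β * t = 0
    · exact .inl (upperMulLower_smul_coe_of_eq_zero hden δ)
    · have hneg : t / (1 - β * t) < 0 := by
        rcases lt_or_ge t 0 with ht0 | ht0
        · exact div_neg_of_neg_of_pos ht0 (by linarith [mul_neg_of_pos_of_neg hβ ht0])
        · have ht1 : β⁻¹ ≤ t := not_lt.1 fun h ↦ ht ⟨ht0, h⟩
          have hle : 1 ≤ β * t := (inv_le_iff_one_le_mul₀' hβ).1 ht1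
          exact div_neg_of_pos_of_neg ((inv_pos.2 hβ).trans_le ht1)
            ((sub_nonpos.2 hle).lt_of_ne hden)
      exact .inr ⟨_, show _ < _ by linarith, (upperMulLower_smul_coe_of_ne_zero hden δ).symm⟩
  · exact .inr ⟨-β⁻¹ - δ, show _ < _ by linarith [inv_pos.2 hβ],
      (upperMulLower_smul_infty hβ.ne' δ).symm⟩

end PingPongSets

theorem stmt_13_general [LinearOrder K] [IsStrictOrderedRing K] {α β γ δ : K} (hα : 0 < α)
    (hγ : 0 < γ) (hαβ : 1 ≤ α * β) (hγδ : 1 ≤ γ * δ) :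
    Injective (FreeGroup.lift fun i : Bool ↦
      if i then upperMulLower β δ else lowerMulUpper α γ) := by
  have hβ : 0 < β := pos_of_mul_pos_right (one_pos.trans_le hαβ) hα.le
  have hβ_inv_le : β⁻¹ ≤ α := (inv_le_iff_one_le_mul₀ hβ).2 hαβ
  have hγ_inv_le : γ⁻¹ ≤ δ := (inv_le_iff_one_le_mul₀' hγ).2 hγδ
  have hδ : 0 ≤ δ := (inv_nonneg.2 hγ.le).trans hγ_inv_le
  refine injective_freeGroupLift_of_smul_compl_subset _ (attractingSet γ δ) (repellingSet α β)
    (attractingSet_nonempty hγ δ) (pairwise_disjoint_attractingSet hγ_inv_le)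
    (pairwise_disjoint_repellingSet hβ_inv_le)
    (disjoint_attractingSet_repellingSet hα.le hδ β γ) ?_
  rintro (_ | _)
  exacts [lowerMulUpper_smul_compl_subset α hγ, upperMulLower_smul_compl_subset hβ δ]

theorem stmt_13 (α β γ δ : ℝ)
    (hα : 0 < α) (hβ : 0 < β) (hγ : 0 < γ) (hδ : 0 < δ)
    (hαβ : 1 ≤ α * β) (hγδ : 1 ≤ γ * δ) :
    Function.Injective
      (FreeGroup.lift (fun x : Bool =>
        if x then
          (⟨!![1 + β * δ, -δ; -β, 1], by simp [Matrix.det_fin_two_of]; ring⟩ :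
            Matrix.SpecialLinearGroup (Fin 2) ℝ)
        else
          (⟨!![1, -α; -γ, 1 + α * γ], by simp [Matrix.det_fin_two_of]⟩ :
            Matrix.SpecialLinearGroup (Fin 2) ℝ)) :
        FreeGroup Bool →* Matrix.SpecialLinearGroup (Fin 2) ℝ) :=
  stmt_13_general hα hγ hαβ hγδ
end

section
/- Let s and t be real numbers with s ≥ 2 and t ≥ 2. Then the matrices [[0, -1], [1, -s]] and [[0, -1], [1, t]] in SL(2, ℝ) freely generate a free subgroup of rank 2; that is, the group homomorphism from the free group on two generators to SL(2, ℝ) sending the generators to these two matrices is injective. -/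
/-!
The matrix `[[0, -1], [1, u]]` acts on the projective line by `z ↦ -1 / (z + u)`. For `u ≥ 2` it
maps `[-1, ∞)` into `[-1, 0)`, and for `u ≤ -2` it maps the complement of `[1, ∞)` into `[0, 1)`.
The arcs `[-1, 0)`, `[0, 1)`, `[1, ∞)` and `{∞} ∪ (-∞, -1)` are disjoint, so the ping-pong lemma
applies. Taking `z = x / y` and clearing denominators turns membership in an arc into a sign
condition on a quadratic form in `(x, y)`, so no division is needed and the argument works over any
linearly ordered commutative ring.
-/

section PingPong

open scoped Function MatrixGroups Pointwise

lemma inv_smul_compl_subset_of_smul_compl_subset {G α : Type*} [Group G] [MulAction G α] {a : G}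
    {X Y : Set α} (h : a • Yᶜ ⊆ X) : a⁻¹ • Xᶜ ⊆ Y := by
  rwa [Set.smul_set_compl, Set.compl_subset_comm, ← Set.smul_set_subset_iff_subset_inv_smul_set]

lemma injective_lift_of_injective_lift_comp_equiv {α β G : Type*} [Group G] (e : α ≃ β) {f : β → G}
    (h : Function.Injective (FreeGroup.lift (f ∘ e))) : Function.Injective (FreeGroup.lift f) := by
  have lift_eq : FreeGroup.lift f =
      (FreeGroup.lift (f ∘ e)).comp (FreeGroup.freeGroupCongr e.symm).toMonoidHom := by
    ext b
    simp
  rw [lift_eq]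
  exact h.comp (FreeGroup.freeGroupCongr e.symm).injective

variable {R : Type*} [CommRing R]

/-- The element of `SL(2, R)` acting on the projective line by `z ↦ -1 / (z + u)`. -/
def negInvShift (u : R) : SL(2, R) :=
  ⟨!![0, -1; 1, u], by simp [Matrix.det_fin_two_of]⟩

lemma coe_negInvShift (u : R) : (negInvShift u : Matrix (Fin 2) (Fin 2) R) = !![0, -1; 1, u] :=
  rfl

lemma negInvShift_mul_apply_zero (u : R) (g : SL(2, R)) (j : Fin 2) :
    (negInvShift u * g) 0 j = -g 1 j := by
  simp [coe_negInvShift, Matrix.mul_apply]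

lemma negInvShift_mul_apply_one (u : R) (g : SL(2, R)) (j : Fin 2) :
    (negInvShift u * g) 1 j = g 0 j + u * g 1 j := by
  simp [coe_negInvShift, Matrix.mul_apply]

/-- The attracting sets of the ping-pong argument, for the action of `SL(2, R)` on itself by left
multiplication: `z = g 0 0 / g 1 0` lies in `[-1, 0)` for `true` and in `[0, 1)` for `false`. -/
def attractingArc (R : Type*) [CommRing R] [LinearOrder R] : Bool → Set SL(2, R)
  | true => {g | g 0 0 ≠ 0 ∧ g 0 0 * (g 0 0 + g 1 0) ≤ 0}
  | false => {g | g 0 0 = 0 ∨ g 0 0 * (g 0 0 - g 1 0) < 0}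

/-- The repelling sets of the ping-pong argument, for the action of `SL(2, R)` on itself by left
multiplication: `z = g 0 0 / g 1 0` lies in `{∞} ∪ (-∞, -1)` for `true` and in `[1, ∞)` for
`false`. -/
def repellingArc (R : Type*) [CommRing R] [LinearOrder R] : Bool → Set SL(2, R)
  | true => {g | g 1 0 = 0 ∨ g 1 0 * (g 0 0 + g 1 0) < 0}
  | false => {g | g 1 0 ≠ 0 ∧ 0 ≤ g 1 0 * (g 0 0 - g 1 0)}

variable [LinearOrder R] [IsStrictOrderedRing R]

lemma attractingArc_nonempty : ∀ b, (attractingArc R b).Nonempty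
  | true => ⟨negInvShift 1 * negInvShift 0, by simp [attractingArc, coe_negInvShift]⟩
  | false => ⟨negInvShift 0, by simp [attractingArc, coe_negInvShift]⟩

lemma pairwise_disjoint_attractingArc : Pairwise (Disjoint on attractingArc R) := by
  refine (pairwise_disjoint_on _).mpr fun b c hbc => Set.disjoint_left.mpr ?_
  obtain ⟨rfl, rfl⟩ := Bool.lt_iff.mp hbc
  rintro g (hx | hlt) ⟨hx', hle⟩
  · exact hx' hx
  · linarith [mul_self_nonneg (g 0 0)]

lemma pairwise_disjoint_repellingArc : Pairwise (Disjoint on repellingArc R) := by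
  refine (pairwise_disjoint_on _).mpr fun b c hbc => Set.disjoint_left.mpr ?_
  obtain ⟨rfl, rfl⟩ := Bool.lt_iff.mp hbc
  rintro g ⟨hy, hle⟩ (hy' | hlt)
  · exact hy hy'
  · linarith [mul_self_nonneg (g 1 0)]

lemma disjoint_attractingArc_repellingArc :
    ∀ b c, Disjoint (attractingArc R b) (repellingArc R c)
  | true, true => by
    refine Set.disjoint_left.mpr ?_
    rintro g ⟨hx, hle⟩ (hy | hlt)
    · rw [hy] at hle
      linarith [mul_self_pos.mpr hx]
    · linarith [mul_self_nonneg (g 0 0 + g 1 0)]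
  | true, false => by
    refine Set.disjoint_left.mpr ?_
    rintro g ⟨hx, hle⟩ ⟨-, hle'⟩
    linarith [mul_self_pos.mpr hx, mul_self_nonneg (g 1 0)]
  | false, true => by
    refine Set.disjoint_left.mpr ?_
    rintro g (hx | hlt) (hy | hlt')
    · exact (g.isCoprime_col 0).ne_zero_or_ne_zero.elim (· hx) (· hy)
    · rw [hx] at hlt'
      linarith [mul_self_nonneg (g 1 0)]
    · rw [hy] at hlt
      linarith [mul_self_nonneg (g 0 0)]
    · linarith [mul_self_nonneg (g 0 0), mul_self_nonneg (g 1 0)]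
  | false, false => by
    refine Set.disjoint_left.mpr ?_
    rintro g (hx | hlt) ⟨hy, hle⟩
    · rw [hx] at hle
      linarith [mul_self_pos.mpr hy]
    · linarith [mul_self_nonneg (g 0 0 - g 1 0)]

lemma negInvShift_mul_mem_attractingArc_true {u : R} (hu : 2 ≤ u) {g : SL(2, R)}
    (hg : g ∉ repellingArc R true) : negInvShift u * g ∈ attractingArc R true := by
  obtain ⟨hy, hle⟩ : g 1 0 ≠ 0 ∧ 0 ≤ g 1 0 * (g 0 0 + g 1 0) := by
    simpa [repellingArc] using hg
  simp only [attractingArc, Set.mem_ofPred_eq, negInvShift_mul_apply_zero,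
    negInvShift_mul_apply_one]
  exact ⟨neg_ne_zero.mpr hy, by
    linarith [mul_nonneg (sub_nonneg.mpr hu) (mul_self_nonneg (g 1 0))]⟩

lemma negInvShift_mul_mem_attractingArc_false {u : R} (hu : u ≤ -2) {g : SL(2, R)}
    (hg : g ∉ repellingArc R false) : negInvShift u * g ∈ attractingArc R false := by
  have hg' : g 1 0 ≠ 0 → g 1 0 * (g 0 0 - g 1 0) < 0 := by
    simpa [repellingArc] using hg
  simp only [attractingArc, Set.mem_ofPred_eq, negInvShift_mul_apply_zero,
    negInvShift_mul_apply_one, neg_eq_zero]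
  refine or_iff_not_imp_left.mpr fun hy => ?_
  linarith [hg' hy, mul_nonneg (sub_nonneg.mpr hu) (mul_self_nonneg (g 1 0))]

theorem stmt_14_general {s t : R} (hs : 2 ≤ s) (ht : 2 ≤ t) :
    Function.Injective
      (FreeGroup.lift fun b : Bool => if b then negInvShift t else negInvShift (-s)) := by
  have smul_compl_subset (b : Bool) :
      (if b then negInvShift t else negInvShift (-s)) • (repellingArc R b)ᶜ ⊆
        attractingArc R b := by
    refine Set.smul_set_subset_iff.mpr fun g hg => ?_
    cases b with
    | true => exact negInvShift_mul_mem_attractingArc_true ht hg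
    | false => exact negInvShift_mul_mem_attractingArc_false (neg_le_neg hs) hg
  -- Mathlib's ping-pong lemma wants the index type in the universe of the group.
  refine injective_lift_of_injective_lift_comp_equiv Equiv.ulift ?_
  exact FreeGroup.injective_lift_of_ping_pong _
    (fun b => attractingArc R b.down) (fun b => repellingArc R b.down)
    (fun b => attractingArc_nonempty b.down)
    (pairwise_disjoint_attractingArc.comp_of_injective ULift.down_injective)
    (pairwise_disjoint_repellingArc.comp_of_injective ULift.down_injective)
    (fun b c => disjoint_attractingArc_repellingArc b.down c.down)
    (fun b => smul_compl_subset b.down)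
    fun b => inv_smul_compl_subset_of_smul_compl_subset (smul_compl_subset b.down)

end PingPong

theorem stmt_14 (s t : ℝ) (hs : 2 ≤ s) (ht : 2 ≤ t) :
    Function.Injective
      (FreeGroup.lift (fun x : Bool =>
        if x then
          (⟨!![0, -1; 1, t], by simp [Matrix.det_fin_two_of]⟩ :
            Matrix.SpecialLinearGroup (Fin 2) ℝ)
        else
          (⟨!![0, -1; 1, -s], by simp [Matrix.det_fin_two_of]⟩ :
            Matrix.SpecialLinearGroup (Fin 2) ℝ)) :
        FreeGroup Bool →* Matrix.SpecialLinearGroup (Fin 2) ℝ) :=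
  stmt_14_general hs ht
end

section
/- Let u and v be real numbers with u > 0, v > 0, and uv ≥ 4. Then the matrices [[1, u], [0, 1]] and [[1, 0], [v, 1]] in SL(2, ℝ) freely generate a free subgroup of rank 2; that is, the group homomorphism from the free group on two generators to SL(2, ℝ) sending the generators to these two matrices is injective. -/
/-!
Sanov's argument. The `n`-th power of the transvection with off-diagonal entry `u` replaces the
vector `(x, y)` by `(x + n u y, y)`. If `|v| |x| < 2 |y|` and `n ≠ 0`, then
`|v| |x + n u y| ≥ |n| |u v| |y| - |v| |x| > 4 |y| - 2 |y| = 2 |y|`, so these powers carry the cone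
`|v| |x| < 2 |y|` into the opposite cone `2 |y| < |v| |x|`. In the same way the nonzero powers of
the other transvection carry the second cone into the first, and the two cones play ping-pong.
-/

open Function
open scoped Pointwise
open Matrix.SpecialLinearGroup (transvection transvection_add transvection_coeff_zero)

theorem injective_freeGroup_lift_of_zpow_ping_pong {ι G α : Type*} [Nontrivial ι] [Group G]
    [MulAction G α] (a : ι → G) (X : ι → Set α) (nonempty : ∀ i, (X i).Nonempty)
    (disjoint : Pairwise (Disjoint on X))
    (ping_pong : Pairwise fun i j => ∀ n : ℤ, n ≠ 0 → a i ^ n • X j ⊆ X i) :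
    Injective (FreeGroup.lift a) := by
  let powers (i : ι) : FreeGroup Unit →* G := FreeGroup.lift fun _ => a i
  have lift_eq : FreeGroup.lift a =
      (Monoid.CoprodI.lift powers).comp freeGroupEquivCoprodI.toMonoidHom := by
    ext i
    simp [powers]
  have powers_ping_pong : Pairwise fun i j => ∀ h, h ≠ 1 → powers i h • X j ⊆ X i := by
    intro i j hij h hne
    obtain ⟨n, rfl⟩ := FreeGroup.freeGroupUnitEquivInt.symm.surjective h
    have hn : n ≠ 0 := by
      rintro rfl
      exact hne (zpow_zero _)
    simpa [powers, FreeGroup.freeGroupUnitEquivInt] using ping_pong hij n hn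
  have infinite : 3 ≤ Cardinal.mk (FreeGroup Unit) := by
    rw [FreeGroup.freeGroupUnitEquivInt.cardinal_eq, Cardinal.mk_denumerable]
    exact Cardinal.natCast_le_aleph0
  rw [lift_eq, MonoidHom.coe_comp]
  exact (Monoid.CoprodI.lift_injective_of_ping_pong powers (.inr ⟨Classical.arbitrary ι, infinite⟩)
    X nonempty disjoint powers_ping_pong).comp freeGroupEquivCoprodI.injective

section Transvection

variable {ι R : Type*} [DecidableEq ι] [Fintype ι] [CommRing R] {i j : ι}

lemma transvection_zpow (hij : i ≠ j) (b : R) (n : ℤ) :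
    transvection hij b ^ n = transvection hij (n * b) := by
  let hom : Multiplicative R →* Matrix.SpecialLinearGroup ι R :=
    { toFun := fun c => transvection hij c.toAdd
      map_one' := transvection_coeff_zero hij
      map_mul' := fun c d => transvection_add hij c.toAdd d.toAdd }
  simpa [hom] using (map_zpow hom (.ofAdd b) n).symm

lemma transvection_smul (hij : i ≠ j) (b : R) (w : ι → R) :
    transvection hij b • w = w + Pi.single i (b * w j) := by
  simp [Matrix.SpecialLinearGroup.smul_def, Matrix.SpecialLinearGroup.transvection_coe,
    Matrix.add_mulVec, Matrix.single_mulVec_eq, ← Pi.single_smul]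

lemma transvection_zero_one (b : R) :
    transvection (zero_ne_one (α := Fin 2)) b =
      ⟨!![1, b; 0, 1], by simp [Matrix.det_fin_two_of]⟩ := by
  ext i j
  fin_cases i <;> fin_cases j <;> simp [Matrix.SpecialLinearGroup.transvection_coe]

lemma transvection_one_zero (b : R) :
    transvection (zero_ne_one (α := Fin 2)).symm b =
      ⟨!![1, 0; b, 1], by simp [Matrix.det_fin_two_of]⟩ := by
  ext i j
  fin_cases i <;> fin_cases j <;> simp [Matrix.SpecialLinearGroup.transvection_coe]

end Transvection

lemma mul_abv_lt_mul_abv_add {R S : Type*} [Ring R] [CommRing S] [LinearOrder S]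
    [IsStrictOrderedRing S] {abv : AbsoluteValue R S}
    (one_le_abv : ∀ n : ℤ, n ≠ 0 → 1 ≤ abv n) {α β : S} (hα : 0 ≤ α) {b x y : R}
    (hb : 2 * β ≤ α * abv b) (hxy : α * abv x < β * abv y) {n : ℤ} (hn : n ≠ 0) :
    β * abv y < α * abv (x + n * b * y) := by
  have abv_le : abv b * abv y ≤ abv (n * b * y) := by
    rw [mul_assoc, map_mul, map_mul]
    exact le_mul_of_one_le_left (by positivity) (one_le_abv n hn)
  calc β * abv y < 2 * β * abv y - α * abv x := by linarith
    _ ≤ α * abv b * abv y - α * abv x := by gcongr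
    _ = α * (abv b * abv y - abv x) := by ring
    _ ≤ α * (abv (n * b * y) - abv x) := by gcongr
    _ ≤ α * abv (x + n * b * y) := by
      rw [add_comm x]
      gcongr
      exact abv.le_add _ _

/-- The cone of vectors whose `i`-th coordinate is small compared with the `j`-th one: the weights
`α` and `β` fix the slope without division. The cones for `(i, j, α, β)` and `(j, i, β, α)` are
the two ping-pong sets. -/
def dominanceCone {ι R S : Type*} [Semiring R] [Semiring S] [PartialOrder S]
    (abv : AbsoluteValue R S) (i j : ι) (α β : S) : Set (ι → R) :=
  {w | α * abv (w i) < β * abv (w j)}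

namespace dominanceCone

variable {ι R S : Type*}

lemma nonempty [Semiring R] [Nontrivial R] [Semiring S] [PartialOrder S] [IsStrictOrderedRing S]
    {abv : AbsoluteValue R S} {i j : ι} (hij : i ≠ j) {α β : S} (hβ : 0 < β) :
    (dominanceCone abv i j α β).Nonempty := by
  classical
  refine ⟨Pi.single j 1, ?_⟩
  simpa [dominanceCone, hij] using mul_pos hβ (abv.pos one_ne_zero)

lemma disjoint_swap [Semiring R] [Semiring S] [PartialOrder S] (abv : AbsoluteValue R S)
    (i j : ι) (α β : S) : Disjoint (dominanceCone abv i j α β) (dominanceCone abv j i β α) :=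
  Set.disjoint_left.2 fun _ => lt_asymm

lemma transvection_zpow_smul_subset [DecidableEq ι] [Fintype ι] [CommRing R] [CommRing S]
    [LinearOrder S] [IsStrictOrderedRing S] {abv : AbsoluteValue R S}
    (one_le_abv : ∀ n : ℤ, n ≠ 0 → 1 ≤ abv n) {i j : ι} (hij : i ≠ j) {α β : S} (hα : 0 ≤ α)
    {b : R} (hb : 2 * β ≤ α * abv b) {n : ℤ} (hn : n ≠ 0) :
    transvection hij b ^ n • dominanceCone abv i j α β ⊆ dominanceCone abv j i β α := by
  rintro _ ⟨w, hw, rfl⟩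
  simpa [dominanceCone, transvection_zpow, transvection_smul, hij.symm] using
    mul_abv_lt_mul_abv_add one_le_abv hα hb hw hn

end dominanceCone

theorem stmt_15_general {ι R S : Type*} [DecidableEq ι] [Fintype ι] [CommRing R]
    [CommRing S] [LinearOrder S] [IsStrictOrderedRing S] (abv : AbsoluteValue R S)
    (one_le_abv : ∀ n : ℤ, n ≠ 0 → 1 ≤ abv n) {i j : ι} (hij : i ≠ j) {u v : R}
    (huv : 4 ≤ abv (u * v)) :
    Injective (FreeGroup.lift fun x : Bool =>
      if x then transvection hij.symm v else transvection hij u) := by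
  have hv : 0 < abv v := by
    refine abv.pos ?_
    rintro rfl
    rw [mul_zero, map_zero] at huv
    exact huv.not_gt four_pos
  have : Nontrivial R := ⟨v, 0, abv.pos_iff.1 hv⟩
  have hu : 2 * 2 ≤ abv v * abv u := by
    rwa [← map_mul, mul_comm v, two_mul, two_add_two_eq_four]
  refine injective_freeGroup_lift_of_zpow_ping_pong (α := ι → R) _
    (fun x => if x then dominanceCone abv i j (abv v) 2 else dominanceCone abv j i 2 (abv v))
    ?nonempty ?disjoint ?ping_pong
  case nonempty =>
    rintro (_ | _)
    · exact dominanceCone.nonempty hij.symm hv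
    · exact dominanceCone.nonempty hij two_pos
  case disjoint =>
    rintro (_ | _) (_ | _) hne
    · exact absurd rfl hne
    · exact dominanceCone.disjoint_swap abv j i 2 (abv v)
    · exact dominanceCone.disjoint_swap abv i j (abv v) 2
    · exact absurd rfl hne
  case ping_pong =>
    rintro (_ | _) (_ | _) hne n hn
    · exact absurd rfl hne
    · exact dominanceCone.transvection_zpow_smul_subset one_le_abv hij hv.le hu hn
    · exact dominanceCone.transvection_zpow_smul_subset one_le_abv hij.symm zero_le_two le_rfl hn
    · exact absurd rfl hne

theorem stmt_15 (u v : ℝ) (hu : 0 < u) (hv : 0 < v) (huv : 4 ≤ u * v) :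
    Function.Injective
      (FreeGroup.lift (fun x : Bool =>
        if x then
          (⟨!![1, 0; v, 1], by simp [Matrix.det_fin_two_of]⟩ :
            Matrix.SpecialLinearGroup (Fin 2) ℝ)
        else
          (⟨!![1, u; 0, 1], by simp [Matrix.det_fin_two_of]⟩ :
            Matrix.SpecialLinearGroup (Fin 2) ℝ)) :
        FreeGroup Bool →* Matrix.SpecialLinearGroup (Fin 2) ℝ) := by
  simpa only [transvection_zero_one, transvection_one_zero] using stmt_15_general AbsoluteValue.abs
    (fun n hn => by simpa using mod_cast Int.one_le_abs hn) (zero_ne_one (α := Fin 2))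
    (huv.trans (le_abs_self _))
end

section
/- Let G be a group acting by homeomorphisms on a topological space X (each g ∈ G acts as a continuous map with continuous inverse). Suppose there exist elements a, b ∈ G freely generating a free subgroup F of rank 2 (the homomorphism from the free group on two generators sending the generators to a, b is injective, with image F) and a nonempty open F-invariant subset Z ⊆ X on which F acts properly discontinuously: for every z ∈ Z there is an open neighborhood U ⊆ Z of z such that (h • U) ∩ U = ∅ for all h ∈ F with h ≠ 1. Then there exist nonempty open subsets A ⊆ Y ⊆ X and elements a', a₀, a₁, a₂ ∈ G such that Y = A ∪ a' • A, the sets a₀ • A, a₁ • A, a₂ • A are pairwise disjoint, and Y is invariant under a', a₀, a₁, a₂ (i.e., a' • Y = Y and aᵢ • Y = Y). -/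
open Pointwise

/-!
Let `F` be free on `a` and `b`, and let `S ⊆ F` consist of the reduced words that do not begin with
`b` or `b⁻¹`. Multiplying a word outside `S` by `a⁻¹` causes no cancellation and puts it in `S`;
hence `F = S ∪ a S`. The sets `bⁿ S` are pairwise disjoint, since for `w ∈ S` the initial power of
`b` in `bⁿ w` is exactly `bⁿ`. If `U` is an open set whose translates by distinct elements of `F`
are disjoint, then `T ↦ T • U` preserves unions, left translations and disjointness, so `A = S • U`
and `Y = F • U` inherit these two properties.
-/

section Words

variable {ι : Type*} [DecidableEq ι]

/-- The reduced words whose first letter, if any, is neither `j` nor `j⁻¹`. It is the piece whose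
translates both cover the free group and pack into it. -/
def wordsNotStartingWith (j : ι) : Set (FreeGroup ι) :=
  (⋃ ε : Bool, FreeGroup.startsWith (j, ε))ᶜ

theorem mem_wordsNotStartingWith {j : ι} {w : FreeGroup ι} :
    w ∈ wordsNotStartingWith j ↔ ∀ ε, w ∉ FreeGroup.startsWith (j, ε) := by
  simp only [wordsNotStartingWith, Set.mem_compl_iff, Set.mem_iUnion, not_exists]

theorem one_mem_wordsNotStartingWith (j : ι) : 1 ∈ wordsNotStartingWith j :=
  mem_wordsNotStartingWith.2 fun _ h ↦ FreeGroup.startsWith.ne_one 1 h rfl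

theorem notMem_startsWith_of_mem_of_ne {x y : ι × Bool} {w : FreeGroup ι}
    (hw : w ∈ FreeGroup.startsWith x) (hxy : x ≠ y) : w ∉ FreeGroup.startsWith y :=
  (FreeGroup.startsWith.disjoint_iff_ne.2 hxy).notMem_of_mem_left hw

theorem of_pow_succ_mul_mem_startsWith {j : ι} {w : FreeGroup ι}
    (hw : w ∈ wordsNotStartingWith j) (n : ℕ) :
    FreeGroup.of j ^ (n + 1) * w ∈ FreeGroup.startsWith (j, true) := by
  induction n with
  | zero =>
    rw [zero_add, pow_one]
    exact FreeGroup.startsWith_mk_mul w (mem_wordsNotStartingWith.1 hw false)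
  | succ n ih =>
    rw [pow_succ', mul_assoc]
    exact FreeGroup.startsWith_mk_mul _ (notMem_startsWith_of_mem_of_ne ih (by simp))

theorem pairwise_disjoint_zpow_smul_wordsNotStartingWith (j : ι) :
    Pairwise (Function.onFun Disjoint
      fun n : ℤ ↦ FreeGroup.of j ^ n • wordsNotStartingWith j) := by
  refine (pairwise_disjoint_on _).2 fun m n hmn ↦ Set.disjoint_left.2 ?_
  rintro _ ⟨v, hv, rfl⟩ ⟨w, hw, hwv⟩
  obtain ⟨k, rfl⟩ : ∃ k : ℕ, n = m + (k + 1 : ℕ) := ⟨(n - m - 1).toNat, by lia⟩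
  have hv_eq : FreeGroup.of j ^ (k + 1) * w = v := by
    simpa only [zpow_add, zpow_natCast, smul_eq_mul, mul_assoc, mul_right_inj] using hwv
  exact mem_wordsNotStartingWith.1 hv true (hv_eq ▸ of_pow_succ_mul_mem_startsWith hw k)

theorem wordsNotStartingWith_union_smul_eq_univ {i j : ι} (hij : i ≠ j) :
    wordsNotStartingWith j ∪ FreeGroup.of i • wordsNotStartingWith j = Set.univ := by
  refine Set.eq_univ_of_forall fun w ↦ or_iff_not_imp_left.2 fun hw ↦ ?_
  obtain ⟨ε, hwε⟩ : ∃ ε, w ∈ FreeGroup.startsWith (j, ε) := by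
    simpa only [mem_wordsNotStartingWith, not_forall, not_not] using hw
  have hmem : (FreeGroup.of i)⁻¹ * w ∈ FreeGroup.startsWith (i, false) :=
    FreeGroup.startsWith_mk_mul w (notMem_startsWith_of_mem_of_ne hwε (by simp [hij.symm]))
  exact Set.mem_smul_set_iff_inv_smul_mem.2 <|
    mem_wordsNotStartingWith.2 fun _ ↦ notMem_startsWith_of_mem_of_ne hmem (by simp [hij])

end Words

section Wandering

/-- A set is wandering for an action of `H` if every nontrivial element of `H` moves it off itself.
Proper discontinuity, in the sense used here, says that every point has a wandering open
neighbourhood. -/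
def IsWandering (H : Type*) {X : Type*} [Group H] [MulAction H X] (U : Set X) : Prop :=
  ∀ h : H, h ≠ 1 → Disjoint (h • U) U

theorem IsWandering.disjoint_smul {H X : Type*} [Group H] [MulAction H X] {U : Set X}
    (hU : IsWandering H U) {S T : Set H} (hST : Disjoint S T) : Disjoint (S • U) (T • U) := by
  refine Set.disjoint_left.2 ?_
  rintro _ ⟨s, hs, u, hu, rfl⟩ ⟨t, ht, v, hv, htv⟩
  have hst : s⁻¹ * t ≠ 1 := fun h ↦ hST.ne_of_mem hs ht (inv_mul_eq_one.1 h)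
  have hu_eq : (s⁻¹ * t) • v = u := by
    rwa [mul_smul, inv_smul_eq_iff]
  exact Set.disjoint_left.1 (hU _ hst) (hu_eq ▸ Set.smul_mem_smul_set hv) hu

theorem IsWandering.exists_isOpen_eq_union_smul_and_pairwise_disjoint {ι X : Type*}
    [TopologicalSpace X] [MulAction (FreeGroup ι) X] [ContinuousConstSMul (FreeGroup ι) X]
    {U : Set X} (hU : IsWandering (FreeGroup ι) U) (hUne : U.Nonempty) (hUopen : IsOpen U)
    {i j : ι} (hij : i ≠ j) :
    ∃ A Y : Set X, A.Nonempty ∧ IsOpen A ∧ IsOpen Y ∧ Y = A ∪ FreeGroup.of i • A ∧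
      Pairwise (Function.onFun Disjoint fun n : ℤ ↦ FreeGroup.of j ^ n • A) ∧
      ∀ w : FreeGroup ι, w • Y = Y := by
  classical
  refine ⟨wordsNotStartingWith j • U, (Set.univ : Set (FreeGroup ι)) • U,
    .smul ⟨1, one_mem_wordsNotStartingWith j⟩ hUne, hUopen.smul_left, hUopen.smul_left, ?_,
    fun m n hmn ↦ ?_, fun w ↦ ?_⟩
  · rw [← smul_assoc, ← Set.union_smul, wordsNotStartingWith_union_smul_eq_univ hij]
  · simp only [Function.onFun, ← smul_assoc]
    exact hU.disjoint_smul (pairwise_disjoint_zpow_smul_wordsNotStartingWith j hmn)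
  · rw [← smul_assoc, Set.smul_set_univ]

end Wandering

theorem stmt_17_general {G X : Type*} [Group G] [TopologicalSpace X] [MulAction G X]
    (a b : G)
    (hcont : ∀ g ∈ Subgroup.closure ({a, b} : Set G), Continuous fun x : X => g • x)
    (hinj : Function.Injective
      (FreeGroup.lift (fun x : Bool => if x then b else a) : FreeGroup Bool →* G))
    {U : Set X} (hUne : U.Nonempty) (hUopen : IsOpen U)
    (hU : ∀ h ∈ Subgroup.closure ({a, b} : Set G), h ≠ 1 → (h • U) ∩ U = ∅) :
    ∃ (A Y : Set X) (a' a0 a1 a2 : G),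
      A.Nonempty ∧ IsOpen A ∧ IsOpen Y ∧ A ⊆ Y ∧
      Y = A ∪ a' • A ∧
      Disjoint (a0 • A) (a1 • A) ∧
      Disjoint (a0 • A) (a2 • A) ∧
      Disjoint (a1 • A) (a2 • A) ∧
      a' • Y = Y ∧ a0 • Y = Y ∧ a1 • Y = Y ∧ a2 • Y = Y := by
  set φ : FreeGroup Bool →* G := FreeGroup.lift fun x : Bool => if x then b else a
  have hφ_mem (w : FreeGroup Bool) : φ w ∈ Subgroup.closure {a, b} := by
    have hrange : Set.range (fun x : Bool ↦ if x then b else a) = {a, b} := by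
      simp [Bool.range_eq]
    rw [← hrange, ← FreeGroup.range_lift_eq_closure]
    exact ⟨w, rfl⟩
  let _ : MulAction (FreeGroup Bool) X := MulAction.compHom X φ
  have : ContinuousConstSMul (FreeGroup Bool) X := ⟨fun w ↦ hcont _ (hφ_mem w)⟩
  have hwandering : IsWandering (FreeGroup Bool) U := fun w hw ↦
    Set.disjoint_iff_inter_eq_empty.2 <| hU _ (hφ_mem w) ((map_ne_one_iff φ hinj).2 hw)
  obtain ⟨A, Y, hAne, hA, hY, hYA, hdisj, hinv⟩ :=
    hwandering.exists_isOpen_eq_union_smul_and_pairwise_disjoint hUne hUopen Bool.false_ne_true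
  let β (n : ℤ) : FreeGroup Bool := FreeGroup.of true ^ n
  exact ⟨A, Y, φ (.of false), φ (β 0), φ (β 1), φ (β 2), hAne, hA, hY,
    hYA ▸ Set.subset_union_left, hYA, hdisj (by decide), hdisj (by decide), hdisj (by decide),
    hinv _, hinv _, hinv _, hinv _⟩

theorem stmt_17 {G X : Type*} [Group G] [TopologicalSpace X] [MulAction G X]
    (hcont : ∀ g : G, Continuous fun x : X => g • x)
    (a b : G)
    (hinj : Function.Injective
      (FreeGroup.lift (fun x : Bool => if x then b else a) : FreeGroup Bool →* G))
    (Z : Set X) (hZne : Z.Nonempty) (hZopen : IsOpen Z)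
    (hZinv : ∀ h ∈ Subgroup.closure ({a, b} : Set G), h • Z = Z)
    (hpd : ∀ z ∈ Z, ∃ U, U ⊆ Z ∧ IsOpen U ∧ z ∈ U ∧
      ∀ h ∈ Subgroup.closure ({a, b} : Set G), h ≠ 1 → (h • U) ∩ U = ∅) :
    ∃ (A Y : Set X) (a' a0 a1 a2 : G),
      A.Nonempty ∧ IsOpen A ∧ IsOpen Y ∧ A ⊆ Y ∧
      Y = A ∪ a' • A ∧
      Disjoint (a0 • A) (a1 • A) ∧
      Disjoint (a0 • A) (a2 • A) ∧
      Disjoint (a1 • A) (a2 • A) ∧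
      a' • Y = Y ∧ a0 • Y = Y ∧ a1 • Y = Y ∧ a2 • Y = Y := by
  obtain ⟨z, hz⟩ := hZne
  obtain ⟨U, -, hUopen, hzU, hU⟩ := hpd z hz
  exact stmt_17_general a b (fun g _ ↦ hcont g) hinj ⟨z, hzU⟩ hUopen hU
end
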